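/- arXiv:2504.19054 — 6 statements merged into one kernel-verified Lean document; each statement's English description precedes it below -/
import Mathlib

section
/- Let M ∈ ℝ^{n×n} be an invertible RDDL matrix and let S ⊆ [n] be a nonempty subset. Then the principal submatrix M_{S,S} is an invertible RDDL matrix, and every entry of (M_{S,S})^{-1} is nonnegative. -/
open Matrix

/-- A matrix `M` (over any finite index type) is an RDDL matrix. -/
def IsRDDL {ι : Type*} [Fintype ι] [DecidableEq ι] (M : Matrix ι ι ℝ) : Prop :=
  (∀ i, 0 < M i i) ∧ (∀ i j, i ≠ j → M i j ≤ 0) ∧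
    (∀ i, ∑ j ∈ Finset.univ.erase i, |M i j| ≤ M i i)

/-- The submatrix `M_{S,T}` of `M` with rows indexed by `S` and columns indexed by `T`. -/
def submatrixOn {n : ℕ} (M : Matrix (Fin n) (Fin n) ℝ) (S T : Finset (Fin n)) :
    Matrix {i // i ∈ S} {j // j ∈ T} ℝ :=
  Matrix.of fun i j => M i.val j.val

/-- Weak minimum principle for invertible RDDL matrices, for vectors vanishing off `S`. -/
theorem rddl_min_principle {n : ℕ}
    (M : Matrix (Fin n) (Fin n) ℝ) (hM : IsRDDL M) (hInv : IsUnit M)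
    (S : Finset (Fin n)) (x : Fin n → ℝ) (hx : ∀ i, i ∉ S → x i = 0)
    (h : ∀ i ∈ S, 0 ≤ ∑ j, M i j * x j) (k : Fin n) : 0 ≤ x k := by
  by_contra! hk
  obtain ⟨hd, ho, hr⟩ := hM
  obtain ⟨z, hz⟩ := (Matrix.mulVec_surjective_iff_isUnit.mpr hInv) (fun _ => 1)
  have hz' : ∀ i, ∑ j, M i j * z j = 1 := fun i => congrFun hz i
  have hrow : ∀ i, 0 ≤ ∑ j, M i j := by
    intro i
    rw [← Finset.add_sum_erase _ _ (Finset.mem_univ i)]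
    have h1 : ∑ j ∈ Finset.univ.erase i, |M i j| = - ∑ j ∈ Finset.univ.erase i, M i j := by
      rw [← Finset.sum_neg_distrib]
      refine Finset.sum_congr rfl fun j hj => abs_of_nonpos (ho i j ?_)
      exact (Finset.ne_of_mem_erase hj).symm
    have := hr i
    linarith
  set B : ℝ := ∑ j, |z j| with hB
  have hB0 : 0 ≤ B := Finset.sum_nonneg fun j _ => abs_nonneg _
  have hzB : ∀ j, |z j| ≤ B := fun j =>
    Finset.single_le_sum (f := fun j => |z j|) (fun j _ => abs_nonneg _) (Finset.mem_univ j)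
  set e : ℝ := -x k / (2 * (B + 1)) with he
  have he0 : 0 < e := div_pos (by linarith) (by linarith)
  have heB : e * (2 * (B + 1)) = -x k := div_mul_cancel₀ _ (by linarith)
  have hez : ∀ j, |e * z j| < -x k / 2 := by
    intro j
    rw [abs_mul, abs_of_pos he0]
    have := mul_le_mul_of_nonneg_left (hzB j) he0.le
    linarith
  obtain ⟨i, -, hi⟩ := Finset.exists_min_image Finset.univ (fun j => x j + e * z j)
    ⟨k, Finset.mem_univ k⟩
  have hik := hi k (Finset.mem_univ k)
  have hzk := abs_lt.mp (hez k)
  have hzi := abs_lt.mp (hez i)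
  have hiS : i ∈ S := by
    by_contra hc
    have := hx i hc
    linarith
  have h1 : ∑ j, M i j * (x j + e * z j) = ∑ j, M i j * x j + e := by
    have : e = e * ∑ j, M i j * z j := by rw [hz' i, mul_one]
    conv_rhs => rw [this]
    rw [Finset.mul_sum, ← Finset.sum_add_distrib]
    exact Finset.sum_congr rfl fun j _ => by ring
  have h2 : ∑ j, M i j * (x j + e * z j) ≤ ∑ j, M i j * (x i + e * z i) := by
    refine Finset.sum_le_sum fun j _ => ?_
    by_cases hij : i = j
    · rw [hij]
    · exact mul_le_mul_of_nonpos_left (hi j (Finset.mem_univ j)) (ho i j hij)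
  rw [← Finset.sum_mul] at h2
  have h3 : (∑ j, M i j) * (x i + e * z i) ≤ 0 :=
    mul_nonpos_of_nonneg_of_nonpos (hrow i) (by linarith)
  have := h i hiS
  linarith

/-- The minimum principle for the principal submatrix. -/
theorem rddl_sub_min_principle {n : ℕ}
    (M : Matrix (Fin n) (Fin n) ℝ) (hM : IsRDDL M) (hInv : IsUnit M)
    (S : Finset (Fin n)) (x : {i // i ∈ S} → ℝ)
    (h : ∀ i, 0 ≤ (submatrixOn M S S *ᵥ x) i) (k : {i // i ∈ S}) : 0 ≤ x k := by
  have := rddl_min_principle M hM hInv S (fun i => if hi : i ∈ S then x ⟨i, hi⟩ else 0)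
    (fun i hi => by simp [hi]) (fun i hi => by
      have h1 := h ⟨i, hi⟩
      have h2 : (submatrixOn M S S *ᵥ x) ⟨i, hi⟩ =
          ∑ j, M i j * (if hj : j ∈ S then x ⟨j, hj⟩ else 0) := by
        rw [← Finset.sum_subset (Finset.subset_univ S) (fun j _ hj => by simp [hj]),
          ← Finset.sum_coe_sort S]
        simp [Matrix.mulVec, dotProduct, submatrixOn]
      rw [← h2]; exact h1) k.1
  simpa using this

theorem rddl_principal_submatrix {n : ℕ}
    (M : Matrix (Fin n) (Fin n) ℝ) (hM : IsRDDL M) (hInv : IsUnit M)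
    (S : Finset (Fin n)) (hS : S.Nonempty) :
    IsRDDL (submatrixOn M S S) ∧ IsUnit (submatrixOn M S S) ∧
      ∀ i j, 0 ≤ (submatrixOn M S S)⁻¹ i j := by
  have hmin := rddl_sub_min_principle M hM hInv S
  have hU : IsUnit (submatrixOn M S S) := by
    rw [← Matrix.mulVec_injective_iff_isUnit]
    intro x y hxy
    have hxy' : submatrixOn M S S *ᵥ x = submatrixOn M S S *ᵥ y := hxy
    funext k
    have h1 := hmin (x - y) (fun i => by rw [Matrix.mulVec_sub, hxy']; simp) k
    have h2 := hmin (y - x) (fun i => by rw [Matrix.mulVec_sub, hxy']; simp) k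
    simp only [Pi.sub_apply] at h1 h2
    linarith
  refine ⟨⟨fun i => hM.1 i, fun i j hij => hM.2.1 i j (fun hc => hij (Subtype.ext hc)), ?_⟩,
    hU, ?_⟩
  · intro i
    refine le_trans ?_ (hM.2.2 i)
    have h1 : ∑ j ∈ Finset.univ.erase i, |submatrixOn M S S i j| =
        ∑ j ∈ (Finset.univ.erase i).map (Function.Embedding.subtype _), |M i j| := by
      rw [Finset.sum_map]; rfl
    rw [h1]
    refine Finset.sum_le_sum_of_subset_of_nonneg ?_ (fun j _ _ => abs_nonneg _)
    intro j hj
    obtain ⟨a, ha, rfl⟩ := Finset.mem_map.mp hj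
    refine Finset.mem_erase.mpr ⟨fun hc => Finset.ne_of_mem_erase ha (Subtype.ext hc),
      Finset.mem_univ _⟩
  · intro i j
    refine hmin (fun k => (submatrixOn M S S)⁻¹ k j) (fun k => ?_) i
    have h1 : (submatrixOn M S S *ᵥ fun k => (submatrixOn M S S)⁻¹ k j) k =
        (submatrixOn M S S * (submatrixOn M S S)⁻¹) k j := rfl
    rw [h1, Matrix.mul_nonsing_inv _ ((Matrix.isUnit_iff_isUnit_det _).mp hU),
      Matrix.one_apply]
    split_ifs <;> norm_num
end

section
/- Let M ∈ ℝ^{n×n} be an invertible RDDL matrix, let b ∈ ℝ^n be a nonnegative vector, and let x̄ := M^{-1}b (so x̄ is nonnegative). Let F ⊊ [n], S := [n] \ F (nonempty), θ ≥ 0, and let x̃ be a nonnegative vector indexed by F with x̃ ≈_θ x̄_F entrywise. Then the vector x̂ := (M_{S,S})^{-1}(b_S − M_{S,F} x̃) satisfies x̂ ≈_θ x̄_S entrywise. -/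
open Matrix

/-- `a ≈_ε b` : `e^{-ε}·a ≤ b ≤ e^{ε}·a`. -/
def EApprox (ε a b : ℝ) : Prop := Real.exp (-ε) * a ≤ b ∧ b ≤ Real.exp ε * a

/-- Minimum principle for invertible RDDL matrices with nonnegative data off `S`. -/
lemma rddl_min_principle_s6 {n : ℕ} (M : Matrix (Fin n) (Fin n) ℝ) (hM : IsRDDL M)
    (hInv : IsUnit M) (F : Finset (Fin n)) (z : Fin n → ℝ)
    (hzF : ∀ i ∈ F, 0 ≤ z i) (hzS : ∀ i, i ∉ F → 0 ≤ (M *ᵥ z) i) : ∀ i, 0 ≤ z i := by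
  by_contra! hcon
  obtain ⟨k, hk⟩ := hcon
  obtain ⟨hd, ho, hr⟩ := hM
  obtain ⟨i0, -, hi0⟩ := Finset.exists_min_image Finset.univ z ⟨k, Finset.mem_univ k⟩
  set u : Fin n → ℝ := M⁻¹ *ᵥ (fun _ => 1) with hu
  have hMu : M *ᵥ u = fun _ => 1 := by
    rw [hu, Matrix.mulVec_mulVec, Matrix.mul_nonsing_inv _ ((Matrix.isUnit_iff_isUnit_det _).1 hInv),
      Matrix.one_mulVec]
  obtain ⟨i, hiA, hi⟩ := Finset.exists_min_image (Finset.univ.filter fun j => z j = z i0) u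
    ⟨i0, by simp⟩
  have hzi : z i = z i0 := by simpa using hiA
  have hmin : ∀ j, z i ≤ z j := fun j => hzi ▸ hi0 j (Finset.mem_univ j)
  have hneg : z i < 0 := lt_of_le_of_lt (hmin k) hk
  have hiF : i ∉ F := fun h => absurd (hzF i h) (not_le.2 hneg)
  have hrow : 0 ≤ ∑ j, M i j := by
    rw [← Finset.add_sum_erase _ _ (Finset.mem_univ i)]
    have h1 : ∑ j ∈ Finset.univ.erase i, |M i j| = - ∑ j ∈ Finset.univ.erase i, M i j := by
      rw [← Finset.sum_neg_distrib]
      exact Finset.sum_congr rfl fun j hj =>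
        abs_of_nonpos (ho i j (Finset.ne_of_mem_erase hj).symm)
    have := hr i
    linarith
  have hterm : ∀ j ∈ Finset.univ, M i j * (z j - z i) ≤ 0 := by
    intro j _
    by_cases h : i = j
    · simp [h]
    · exact mul_nonpos_of_nonpos_of_nonneg (ho i j h) (sub_nonneg.2 (hmin j))
  have hsplit : ∀ v : Fin n → ℝ,
      (M *ᵥ v) i = ∑ j, M i j * (v j - v i) + (∑ j, M i j) * v i := by
    intro v
    rw [Finset.sum_mul, ← Finset.sum_add_distrib]
    simp only [Matrix.mulVec, dotProduct]
    exact Finset.sum_congr rfl fun j _ => by ring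
  have hz := hzS i hiF
  rw [hsplit] at hz
  have hle := Finset.sum_nonpos hterm
  have hle2 : (∑ j, M i j) * z i ≤ 0 := mul_nonpos_of_nonneg_of_nonpos hrow hneg.le
  have e1 : ∑ j, M i j * (z j - z i) = 0 := by linarith
  have e2 : (∑ j, M i j) * z i = 0 := by linarith
  have e3 : ∑ j, M i j = 0 := (mul_eq_zero.1 e2).resolve_right hneg.ne
  have e4 := (Finset.sum_eq_zero_iff_of_nonpos hterm).1 e1
  have h1 := congrFun hMu i
  rw [hsplit, e3, zero_mul, add_zero] at h1
  have : ∑ j, M i j * (u j - u i) ≤ 0 := by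
    refine Finset.sum_nonpos fun j hj => ?_
    by_cases h : i = j
    · simp [h]
    rcases mul_eq_zero.1 (e4 j hj) with h0 | h0
    · simp [h0]
    · refine mul_nonpos_of_nonpos_of_nonneg (ho i j h) (sub_nonneg.2 (hi j ?_))
      simp only [Finset.mem_filter, Finset.mem_univ, true_and]
      linarith
  linarith

/-- Glue a vector on `F` and a vector on the complement of `F`. -/
def glueVec {n : ℕ} (F : Finset (Fin n)) (y : {i // i ∈ F} → ℝ) (x : {i // i ∈ Fᶜ} → ℝ) :
    Fin n → ℝ :=
  fun i => if h : i ∈ F then y ⟨i, h⟩ else x ⟨i, Finset.mem_compl.2 h⟩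

lemma glueVec_mem {n : ℕ} (F : Finset (Fin n)) (y : {i // i ∈ F} → ℝ) (x : {i // i ∈ Fᶜ} → ℝ)
    (i : {i // i ∈ F}) : glueVec F y x i.val = y i := by
  simp [glueVec, i.2]

lemma glueVec_compl {n : ℕ} (F : Finset (Fin n)) (y : {i // i ∈ F} → ℝ)
    (x : {i // i ∈ Fᶜ} → ℝ) (i : {i // i ∈ Fᶜ}) : glueVec F y x i.val = x i := by
  simp [glueVec, Finset.mem_compl.1 i.2]

lemma mulVec_glueVec {n : ℕ} (M : Matrix (Fin n) (Fin n) ℝ) (F : Finset (Fin n))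
    (y : {i // i ∈ F} → ℝ) (x : {i // i ∈ Fᶜ} → ℝ) (i : {i // i ∈ Fᶜ}) :
    (M *ᵥ glueVec F y x) i.val =
      ∑ j : {j // j ∈ F}, M i.val j.val * y j + (submatrixOn M Fᶜ Fᶜ *ᵥ x) i := by
  simp only [Matrix.mulVec, dotProduct, submatrixOn, Matrix.of_apply]
  rw [← Finset.sum_add_sum_compl F, ← Finset.sum_coe_sort F, ← Finset.sum_coe_sort Fᶜ]
  congr 1
  · exact Finset.sum_congr rfl fun j _ => by rw [glueVec_mem]
  · exact Finset.sum_congr rfl fun j _ => by rw [glueVec_compl]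

lemma isUnit_submatrixOn_compl {n : ℕ} (M : Matrix (Fin n) (Fin n) ℝ) (hM : IsRDDL M)
    (hInv : IsUnit M) (F : Finset (Fin n)) : IsUnit (submatrixOn M Fᶜ Fᶜ) := by
  have key : ∀ x, submatrixOn M Fᶜ Fᶜ *ᵥ x = 0 → ∀ i, 0 ≤ x i := by
    intro x hx i
    have := rddl_min_principle_s6 M hM hInv F (glueVec F 0 x)
      (fun i hi => by rw [glueVec_mem F 0 x ⟨i, hi⟩]; simp)
      (fun i hi => by
        rw [mulVec_glueVec M F 0 x ⟨i, Finset.mem_compl.2 hi⟩, hx]; simp) i.val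
    rwa [glueVec_compl] at this
  rw [← Matrix.mulVec_injective_iff_isUnit]
  intro x y hxy
  have hxy : submatrixOn M Fᶜ Fᶜ *ᵥ x = submatrixOn M Fᶜ Fᶜ *ᵥ y := hxy
  funext i
  have h1 := key (x - y) (by rw [Matrix.mulVec_sub, hxy, sub_self]) i
  have h2 := key (y - x) (by rw [Matrix.mulVec_sub, hxy, sub_self]) i
  simp only [Pi.sub_apply] at h1 h2
  linarith

/-- Substituting an entrywise `e^θ`-approximation `x̃` of `x̄` on `F` into the system and
solving the reduced system on `S = [n] \ F` yields an entrywise `e^θ`-approximation of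
`x̄` on `S`. -/
theorem remove_large_entries {n : ℕ}
    (M : Matrix (Fin n) (Fin n) ℝ) (hM : IsRDDL M) (hInv : IsUnit M)
    (b : Fin n → ℝ) (hb : ∀ i, 0 ≤ b i)
    (xbar : Fin n → ℝ) (hxbar : xbar = M⁻¹ *ᵥ b)
    (F : Finset (Fin n)) (hF : F ⊂ Finset.univ)
    (θ : ℝ) (hθ : 0 ≤ θ)
    (xtil : {i // i ∈ F} → ℝ) (hxtil_nonneg : ∀ i, 0 ≤ xtil i)
    (hxtil : ∀ i : {i // i ∈ F}, EApprox θ (xtil i) (xbar i.val))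
    (xhat : {i // i ∈ Fᶜ} → ℝ)
    (hxhat : xhat = (submatrixOn M Fᶜ Fᶜ)⁻¹ *ᵥ
      fun i : {i // i ∈ Fᶜ} => b i.val - ∑ j : {j // j ∈ F}, M i.val j.val * xtil j) :
    ∀ i : {i // i ∈ Fᶜ}, EApprox θ (xhat i) (xbar i.val) := by
  have hU := isUnit_submatrixOn_compl M hM hInv F
  have hMx : M *ᵥ xbar = b := by
    rw [hxbar, Matrix.mulVec_mulVec,
      Matrix.mul_nonsing_inv _ ((Matrix.isUnit_iff_isUnit_det _).1 hInv), Matrix.one_mulVec]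
  have hS := congrArg (fun v => submatrixOn M Fᶜ Fᶜ *ᵥ v) hxhat
  simp only [Matrix.mulVec_mulVec] at hS
  rw [Matrix.mul_nonsing_inv _ ((Matrix.isUnit_iff_isUnit_det _).1 hU), Matrix.one_mulVec] at hS
  set g := glueVec F xtil xhat with hg
  have hMg : ∀ i, i ∉ F → (M *ᵥ g) i = b i := by
    intro i hi
    have := mulVec_glueVec M F xtil xhat ⟨i, Finset.mem_compl.2 hi⟩
    rw [hS] at this
    rw [hg, this]
    ring
  have hgF : ∀ i (hi : i ∈ F), g i = xtil ⟨i, hi⟩ := fun i hi => glueVec_mem F _ _ ⟨i, hi⟩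
  have h1 := rddl_min_principle_s6 M hM hInv F (xbar - Real.exp (-θ) • g)
    (fun i hi => by
      have := (hxtil ⟨i, hi⟩).1
      simp only [Pi.sub_apply, Pi.smul_apply, smul_eq_mul, hgF i hi]
      linarith)
    (fun i hi => by
      rw [Matrix.mulVec_sub, Matrix.mulVec_smul, hMx]
      simp only [Pi.sub_apply, Pi.smul_apply, smul_eq_mul, hMg i hi]
      have : Real.exp (-θ) ≤ 1 := Real.exp_le_one_iff.2 (by linarith)
      nlinarith [hb i])
  have h2 := rddl_min_principle_s6 M hM hInv F (Real.exp θ • g - xbar)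
    (fun i hi => by
      have := (hxtil ⟨i, hi⟩).2
      simp only [Pi.sub_apply, Pi.smul_apply, smul_eq_mul, hgF i hi]
      linarith)
    (fun i hi => by
      rw [Matrix.mulVec_sub, Matrix.mulVec_smul, hMx]
      simp only [Pi.sub_apply, Pi.smul_apply, smul_eq_mul, hMg i hi]
      have : 1 ≤ Real.exp θ := Real.one_le_exp hθ
      nlinarith [hb i])
  intro i
  have e : g i.val = xhat i := glueVec_compl F _ _ i
  have a1 := h1 i.val
  have a2 := h2 i.val
  simp only [Pi.sub_apply, Pi.smul_apply, smul_eq_mul, e] at a1 a2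
  exact ⟨by linarith, by linarith⟩
end

section
/- Let L ∈ ℝ^{n×n} be an invertible SDDM matrix with integer entries in [−U, U] for some integer U ≥ 1, let b ∈ ℝ^n, and let x := L^{-1}b. Let θ > 0 and C ⊆ [n] be such that |x_i| ≤ θ for all i ∈ C, and set F := [n] \ C. Let y ∈ ℝ^n be the vector with y_F = (L_{F,F})^{-1} b_F and y_C = 0. Then ‖y − x‖₂ ≤ n³·U·θ. -/
open Matrix

/-- The ℓ₂ norm of a vector. -/
noncomputable def l2norm {n : ℕ} (v : Fin n → ℝ) : ℝ := Real.sqrt (∑ i, (v i) ^ 2)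

theorem max_principle {n : ℕ} (L : Matrix (Fin n) (Fin n) ℝ) (hL : IsRDDL L)
    (hSym : L.IsSymm) (hInv : IsUnit L) (C : Finset (Fin n)) (d : Fin n → ℝ) (θ : ℝ)
    (hθ : 0 ≤ θ) (hC : ∀ i ∈ C, |d i| ≤ θ) (hF : ∀ i, i ∉ C → (L *ᵥ d) i = 0) :
    ∀ i, |d i| ≤ θ := by
  obtain ⟨hpos, hneg, hdom⟩ := hL
  by_contra! hcon
  obtain ⟨k, hk⟩ := hcon
  obtain ⟨i0, -, hmax⟩ := Finset.exists_max_image Finset.univ (fun i => |d i|) ⟨k, Finset.mem_univ k⟩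
  obtain ⟨m, hm⟩ : ∃ m, m = |d i0| := ⟨_, rfl⟩
  have hmax' : ∀ j, |d j| ≤ m := fun j => hm ▸ hmax j (Finset.mem_univ j)
  have hmθ : θ < m := lt_of_lt_of_le hk (hmax' k)
  have hm0 : 0 < m := lt_of_le_of_lt hθ hmθ
  have key : ∀ i, |d i| = m →
      L i i ≤ ∑ j ∈ Finset.univ.erase i, |L i j| ∧ ∀ j, j ≠ i → |L i j| * (m - |d j|) = 0 := by
    intro i hi
    have hiC : i ∉ C := fun h => by linarith [hC i h]
    have h0 := hF i hiC
    simp only [Matrix.mulVec, dotProduct] at h0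
    rw [← Finset.add_sum_erase _ _ (Finset.mem_univ i)] at h0
    have h1 : L i i * m ≤ ∑ j ∈ Finset.univ.erase i, |L i j| * |d j| := by
      calc L i i * m = |L i i * d i| := by rw [abs_mul, hi, abs_of_pos (hpos i)]
        _ = |∑ j ∈ Finset.univ.erase i, L i j * d j| := by
          rw [eq_neg_of_add_eq_zero_left h0, abs_neg]
        _ ≤ ∑ j ∈ Finset.univ.erase i, |L i j * d j| := Finset.abs_sum_le_sum_abs _ _
        _ = _ := by simp only [abs_mul]
    have hnn : ∀ j ∈ Finset.univ.erase i, 0 ≤ |L i j| * (m - |d j|) := fun j _ =>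
      mul_nonneg (abs_nonneg _) (by linarith [hmax' j])
    have hs : ∑ j ∈ Finset.univ.erase i, |L i j| * (m - |d j|)
        = (∑ j ∈ Finset.univ.erase i, |L i j|) * m
          - ∑ j ∈ Finset.univ.erase i, |L i j| * |d j| := by
      simp only [mul_sub, Finset.sum_sub_distrib, Finset.sum_mul]
    have hge := Finset.sum_nonneg hnn
    have hd := mul_le_mul_of_nonneg_right (hdom i) hm0.le
    refine ⟨le_of_mul_le_mul_right (by linarith) hm0, fun j hj => ?_⟩
    exact (Finset.sum_eq_zero_iff_of_nonneg hnn).1 (by linarith) j (by simp [hj])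
  have hz : L *ᵥ (fun j => if |d j| = m then (1:ℝ) else 0) = 0 := by
    funext i
    simp only [Matrix.mulVec, dotProduct, Pi.zero_apply]
    by_cases hi : |d i| = m
    · obtain ⟨h1, h2⟩ := key i hi
      rw [← Finset.add_sum_erase _ _ (Finset.mem_univ i)]
      have : ∑ j ∈ Finset.univ.erase i, L i j * (if |d j| = m then (1:ℝ) else 0)
          = - ∑ j ∈ Finset.univ.erase i, |L i j| := by
        rw [← Finset.sum_neg_distrib]
        refine Finset.sum_congr rfl fun j hj => ?_
        have hji := Finset.ne_of_mem_erase hj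
        rw [abs_of_nonpos (hneg i j hji.symm)]
        split_ifs with h
        · ring
        · rcases mul_eq_zero.1 (h2 j hji) with h3 | h3
          · simp [abs_eq_zero.1 h3]
          · exact absurd (by linarith) h
      rw [this, if_pos hi]
      linarith [hdom i]
    · refine Finset.sum_eq_zero fun j _ => ?_
      split_ifs with h
      · have hij : i ≠ j := fun e => hi (e ▸ h)
        rcases mul_eq_zero.1 ((key j h).2 i hij) with h3 | h3
        · have := hSym.apply i j
          rw [← this, abs_eq_zero.1 h3, zero_mul]
        · exact absurd (by linarith) hi
      · simp
  have hinj := Matrix.mulVec_injective_of_isUnit hInv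
  have h0 := hinj (hz.trans (Matrix.mulVec_zero L).symm)
  have := congrFun h0 i0
  simp [← hm] at this

theorem sum_split {n : ℕ} (C : Finset (Fin n)) (f : Fin n → ℝ) (hf : ∀ i ∈ C, f i = 0) :
    ∑ j, f j = ∑ j : {j // j ∈ Cᶜ}, f j.val := by
  rw [Finset.sum_coe_sort Cᶜ f,
    ← Finset.sum_add_sum_compl C f, Finset.sum_eq_zero hf, zero_add]

/-- Zeroing out small entries of the solution of an SDDM system and solving the reduced
system on the remaining coordinates `F = [n] \ C` incurs ℓ₂ error at most `n³·U·θ`. -/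
theorem zero_out_small_entries {n : ℕ} (U : ℕ) (hU : 1 ≤ U)
    (L : Matrix (Fin n) (Fin n) ℝ) (hL : IsRDDL L) (hSym : L.IsSymm) (hInv : IsUnit L)
    (hint : ∀ i j, ∃ z : ℤ, L i j = (z : ℝ) ∧ |z| ≤ (U : ℤ))
    (b : Fin n → ℝ) (x : Fin n → ℝ) (hx : x = L⁻¹ *ᵥ b)
    (θ : ℝ) (hθ : 0 < θ)
    (C : Finset (Fin n)) (hC : ∀ i ∈ C, |x i| ≤ θ)
    (y : Fin n → ℝ)
    (hyC : ∀ i ∈ C, y i = 0)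
    (hyF : ∀ i : {i // i ∈ Cᶜ},
      y i.val = ((submatrixOn L Cᶜ Cᶜ)⁻¹ *ᵥ fun j : {j // j ∈ Cᶜ} => b j.val) i) :
    l2norm (y - x) ≤ (n : ℝ) ^ 3 * U * θ := by
  have hunit : IsUnit (submatrixOn L Cᶜ Cᶜ) := by
    rw [← Matrix.mulVec_injective_iff_isUnit]
    rw [← Matrix.coe_mulVecLin]
    rw [← LinearMap.ker_eq_bot, LinearMap.ker_eq_bot']
    intro v hv
    rw [Matrix.mulVecLin_apply] at hv
    have := max_principle L hL hSym hInv C (fun i => if h : i ∈ Cᶜ then v ⟨i, h⟩ else 0) 0 le_rfl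
      (fun i hi => by simp [hi]) (fun i hi => by
        have hi' : i ∈ Cᶜ := by simpa using hi
        have h1 := congrFun hv ⟨i, hi'⟩
        simp only [Matrix.mulVec, dotProduct, submatrixOn, Matrix.of_apply, Pi.zero_apply] at h1 ⊢
        rw [sum_split C _ (fun j hj => by simp [hj]), ← h1]
        refine Finset.sum_congr rfl fun j _ => ?_
        rw [dif_pos j.2])
    funext i
    have h2 := this i.1
    rw [dif_pos i.2] at h2
    exact abs_eq_zero.1 (le_antisymm h2 (abs_nonneg _))
  have hLx : L *ᵥ x = b := by
    rw [hx, Matrix.mulVec_mulVec, Matrix.mul_nonsing_inv _ ((Matrix.isUnit_iff_isUnit_det _).1 hInv),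
      Matrix.one_mulVec]
  have hLy : submatrixOn L Cᶜ Cᶜ *ᵥ (fun i => y i.val) = fun j => b j.val := by
    rw [show (fun i : {i // i ∈ Cᶜ} => y i.val) = _ from funext hyF, Matrix.mulVec_mulVec,
      Matrix.mul_nonsing_inv _ ((Matrix.isUnit_iff_isUnit_det _).1 hunit), Matrix.one_mulVec]
  have hd := max_principle L hL hSym hInv C (y - x) θ hθ.le
    (fun i hi => by simpa [hyC i hi] using hC i hi) (fun i hi => by
      have hi' : i ∈ Cᶜ := by simpa using hi
      have h1 := congrFun hLy ⟨i, hi'⟩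
      rw [Matrix.mulVec_sub, Pi.sub_apply, hLx, sub_eq_zero]
      simp only [Matrix.mulVec, dotProduct, submatrixOn, Matrix.of_apply] at h1 ⊢
      rw [sum_split C _ (fun j hj => by simp [hyC j hj]), ← h1])
  have hU' : (1:ℝ) ≤ U := by exact_mod_cast hU
  unfold l2norm
  rcases Nat.eq_zero_or_pos n with rfl | hn
  · simp
  have hn' : (1:ℝ) ≤ n := by exact_mod_cast hn
  have hsum : ∑ i, ((y - x) i) ^ 2 ≤ (n:ℝ) * θ ^ 2 := by
    calc ∑ i, ((y - x) i) ^ 2 ≤ ∑ _i : Fin n, θ ^ 2 :=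
          Finset.sum_le_sum fun i _ => sq_le_sq.2 (by rw [abs_of_pos hθ]; exact hd i)
      _ = _ := by simp
  have hnθ : (n:ℝ) * θ ≤ (n:ℝ) ^ 3 * U * θ := by
    refine mul_le_mul_of_nonneg_right ?_ hθ.le
    have h3 : (n:ℝ) ≤ (n:ℝ) ^ 3 := le_self_pow₀ hn' (by norm_num)
    exact h3.trans (le_mul_of_one_le_right (by positivity) hU')
  refine le_trans ?_ hnθ
  apply Real.sqrt_le_iff.2 ⟨by positivity, hsum.trans ?_⟩
  rw [mul_pow]
  exact mul_le_mul_of_nonneg_right (le_self_pow₀ hn' (by norm_num)) (by positivity)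
end

section
/- Let L be an n×n invertible SDDM matrix with integer entries in [−U, U] for some integer U ≥ 1, let b ∈ ℝ^n be a nonnegative vector, and set x := L^{-1}b. Let F ⊆ [n] be a set containing the support { i : b_i > 0 } of b, and let C := [n] \ F. Let ∂F := { i ∈ F : ∃ j ∈ C with L_{ij} ≠ 0 } be the inner boundary of F, and let Δ := max_{u ∈ ∂F} ((L_{F,F})^{-1} b_F)_u, with the convention Δ := 0 if ∂F = ∅. Then for every i ∈ C, x_i ≤ n³·U·Δ. -/
open Matrix

lemma aux_key {n : ℕ} (L : Matrix (Fin n) (Fin n) ℝ) (hSym : L.IsSymm)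
    (hker : ∀ z, L *ᵥ z = 0 → z = 0) (S : Finset (Fin n)) (hS : S.Nonempty)
    (h0 : ∀ i ∈ S, ∑ j, L i j = 0) (h1 : ∀ i ∈ S, ∀ j, j ∉ S → L i j = 0) : False := by
  obtain ⟨s, hs⟩ := hS
  have h := hker (fun i => if i ∈ S then 1 else 0) (by
    ext i
    simp only [mulVec, dotProduct, Pi.zero_apply]
    by_cases hi : i ∈ S
    · rw [← h0 i hi]
      refine Finset.sum_congr rfl fun j _ => ?_
      by_cases hj : j ∈ S
      · simp [hj]
      · simp [hj, h1 i hi j hj]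
    · refine Finset.sum_eq_zero fun j _ => ?_
      by_cases hj : j ∈ S
      · have := h1 j hj i hi
        rw [hSym.apply] at this
        simp [this]
      · simp [hj])
  have := congrFun h s
  simp [hs] at this

lemma aux_min {n : ℕ} (L : Matrix (Fin n) (Fin n) ℝ) (hSym : L.IsSymm)
    (hker : ∀ z, L *ᵥ z = 0 → z = 0)
    (hsum : ∀ i, 0 ≤ ∑ j, L i j) (hoff : ∀ i j, i ≠ j → L i j ≤ 0)
    (z : Fin n → ℝ) (hz : ∀ i, z i < 0 → 0 ≤ (L *ᵥ z) i) (i : Fin n) : 0 ≤ z i := by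
  by_contra hi
  push Not at hi
  obtain ⟨m, -, hm⟩ := Finset.exists_min_image Finset.univ z ⟨i, Finset.mem_univ i⟩
  have hm' : ∀ k, z m ≤ z k := fun k => hm k (Finset.mem_univ k)
  have hneg : z m < 0 := lt_of_le_of_lt (hm' i) hi
  have key : ∀ k, z k = z m → (∑ j, L k j = 0) ∧ ∀ j, L k j * (z j - z m) = 0 := by
    intro k hk
    have h1 := hz k (by rw [hk]; exact hneg)
    have h2 : (L *ᵥ z) k = ∑ j, L k j * (z j - z m) + z m * ∑ j, L k j := by
      simp only [mulVec, dotProduct, mul_sub, Finset.sum_sub_distrib, ← Finset.sum_mul]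
      ring
    have h3 : ∀ j ∈ Finset.univ, L k j * (z j - z m) ≤ 0 := by
      intro j _
      by_cases hkj : k = j
      · rw [← hkj, hk]; simp
      · exact mul_nonpos_of_nonpos_of_nonneg (hoff k j hkj) (sub_nonneg.2 (hm' j))
    have h4 := Finset.sum_nonpos h3
    have h5 := hsum k
    have h6 : z m * ∑ j, L k j ≤ 0 := mul_nonpos_of_nonpos_of_nonneg hneg.le h5
    have h7 : z m * ∑ j, L k j = 0 := by linarith
    have h8 : ∑ j, L k j * (z j - z m) = 0 := by linarith
    refine ⟨(mul_eq_zero.1 h7).resolve_left hneg.ne, fun j => ?_⟩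
    exact (Finset.sum_eq_zero_iff_of_nonpos h3).1 h8 j (Finset.mem_univ j)
  refine aux_key L hSym hker (Finset.univ.filter fun k => z k = z m) ⟨m, by simp⟩ ?_ ?_
  · intro k hk
    exact (key k (by simpa using hk)).1
  · intro k hk j hj
    refine (mul_eq_zero.1 ((key k (by simpa using hk)).2 j)).resolve_right ?_
    exact sub_ne_zero.2 (by simpa using hj)

lemma aux_bound {n : ℕ} (L : Matrix (Fin n) (Fin n) ℝ) (hSym : L.IsSymm)
    (hker : ∀ z, L *ᵥ z = 0 → z = 0)
    (hsum : ∀ i, 0 ≤ ∑ j, L i j) (hoff : ∀ i j, i ≠ j → L i j ≤ 0)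
    (hint : ∀ i j, ∃ z : ℤ, L i j = (z : ℝ))
    (j : Fin n) (g : Fin n → ℝ) (hg : ∀ i, 0 ≤ g i) (hLg : L *ᵥ g = Pi.single j 1) :
    ∀ i, g i ≤ n := by
  have step : ∀ i, g i ≤ 1 ∨ ∃ k, g k < g i ∧ g i ≤ g k + 1 := by
    intro i
    by_contra hcon
    push Not at hcon
    obtain ⟨hc1, hc2⟩ := hcon
    set S := Finset.univ.filter fun k => g i ≤ g k with hSdef
    have hmem : ∀ k, k ∈ S ↔ g i ≤ g k := by intro k; simp [hSdef]
    have e1 : ∑ a ∈ S, (L *ᵥ g) a ≤ 1 := by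
      rw [hLg]
      calc ∑ a ∈ S, (Pi.single j 1 : Fin n → ℝ) a
          ≤ ∑ a, (Pi.single j 1 : Fin n → ℝ) a := by
            refine Finset.sum_le_sum_of_subset_of_nonneg (Finset.subset_univ _) ?_
            intro a _ _
            by_cases h : a = j
            · subst h; simp
            · simp [h]
        _ = 1 := by simp
    have e2 : ∀ a, (L *ᵥ g) a = g a * ∑ k, L a k + (∑ k ∈ S, (-L a k) * (g a - g k)
        + ∑ k ∈ Sᶜ, (-L a k) * (g a - g k)) := by
      intro a
      rw [Finset.sum_add_sum_compl, Finset.mul_sum, ← Finset.sum_add_distrib]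
      simp only [mulVec, dotProduct]
      exact Finset.sum_congr rfl fun k _ => by ring
    have e3 : ∑ a ∈ S, ∑ k ∈ S, (-L a k) * (g a - g k) = 0 := by
      have : ∑ a ∈ S, ∑ k ∈ S, (-L a k) * (g a - g k)
          = - ∑ a ∈ S, ∑ k ∈ S, (-L a k) * (g a - g k) := by
        conv_lhs => rw [Finset.sum_comm]
        rw [← Finset.sum_neg_distrib]
        refine Finset.sum_congr rfl fun a _ => ?_
        rw [← Finset.sum_neg_distrib]
        refine Finset.sum_congr rfl fun k _ => ?_
        rw [hSym.apply a k]; ring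
      linarith
    simp only [e2] at e1
    rw [Finset.sum_add_distrib, Finset.sum_add_distrib, e3, zero_add] at e1
    have p1 : ∀ a ∈ S, 0 ≤ g a * ∑ k, L a k := fun a _ => mul_nonneg (hg a) (hsum a)
    have p2 : ∀ a ∈ S, ∀ k ∈ Sᶜ, 0 ≤ (-L a k) * (g a - g k) := by
      intro a ha k hk
      have h1 := (hmem a).1 ha
      have h2 : g k < g i := by
        have := Finset.mem_compl.1 hk
        rw [hmem] at this; exact not_le.1 this
      have h3 : a ≠ k := by rintro rfl; linarith
      exact mul_nonneg (neg_nonneg.2 (hoff a k h3)) (by linarith)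
    have p3 : ∀ a ∈ S, 0 ≤ ∑ k ∈ Sᶜ, (-L a k) * (g a - g k) :=
      fun a ha => Finset.sum_nonneg (p2 a ha)
    have q1 := Finset.sum_nonneg p1
    have q3 := Finset.sum_nonneg p3
    refine aux_key L hSym hker S ⟨i, (hmem i).2 le_rfl⟩ ?_ ?_
    · intro a ha
      by_contra hne
      have hpos : 0 < ∑ k, L a k := lt_of_le_of_ne (hsum a) (Ne.symm hne)
      have hone : 1 ≤ ∑ k, L a k := by
        choose f hf using hint
        have : ∑ k, L a k = ((∑ k, f a k : ℤ) : ℝ) := by push_cast; simp [hf]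
        rw [this] at hpos ⊢
        exact_mod_cast hpos
      have h1 := Finset.single_le_sum p1 ha
      have h2 := (hmem a).1 ha
      have h3 : g a ≤ g a * ∑ k, L a k := le_mul_of_one_le_right (hg a) hone
      linarith
    · intro a ha k hk
      by_contra hne
      have h2 := (hmem a).1 ha
      have h4 : g k < g i := by rw [hmem] at hk; exact not_le.1 hk
      have h5 : a ≠ k := by rintro rfl; linarith
      have hneg : L a k < 0 := lt_of_le_of_ne (hoff a k h5) hne
      have hone : 1 ≤ - L a k := by
        obtain ⟨f, hf⟩ := hint a k
        rw [hf] at hneg ⊢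
        have : f < 0 := by exact_mod_cast hneg
        have : (1:ℤ) ≤ -f := by omega
        exact_mod_cast this
      have h1 := Finset.single_le_sum p3 ha
      have h6 := Finset.single_le_sum (p2 a ha) (Finset.mem_compl.2 hk)
      have h7 := hc2 k h4
      have h8 : g a - g k ≤ (-L a k) * (g a - g k) :=
        le_mul_of_one_le_left (by linarith) hone
      linarith
  have ind : ∀ m : ℕ, ∀ i, (Finset.univ.filter fun k => g k < g i).card = m →
      g i ≤ (m : ℝ) + 1 := by
    intro m
    induction m using Nat.strong_induction_on with
    | _ m ih =>
      intro i hi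
      rcases step i with h | ⟨k, hk1, hk2⟩
      · have : (0 : ℝ) ≤ m := Nat.cast_nonneg m
        linarith
      · have hlt : (Finset.univ.filter fun l => g l < g k).card < m := by
          rw [← hi]
          refine Finset.card_lt_card ?_
          refine ⟨fun l hl => ?_, fun hsub => ?_⟩
          · simp only [Finset.mem_filter, Finset.mem_univ, true_and] at hl ⊢
            linarith
          · have := hsub (show k ∈ _ by simpa using hk1)
            simp at this
        have h1 := ih _ hlt k rfl
        have h2 : ((Finset.univ.filter fun l => g l < g k).card : ℝ) + 1 ≤ m := by
          exact_mod_cast hlt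
        linarith
  intro i
  have h1 := ind _ i rfl
  have h2 : (Finset.univ.filter fun k => g k < g i).card < n := by
    have : (Finset.univ.filter fun k => g k < g i).card < (Finset.univ : Finset (Fin n)).card := by
      refine Finset.card_lt_card ⟨Finset.subset_univ _, fun hsub => ?_⟩
      have := hsub (Finset.mem_univ i)
      simp at this
    simpa using this
  have h3 : ((Finset.univ.filter fun k => g k < g i).card : ℝ) + 1 ≤ n := by exact_mod_cast h2
  linarith

open Classical in
/-- For an invertible SDDM matrix `L` with integer entries in `[-U,U]`, a nonnegative
vector `b` whose support is contained in `F`, letting `bd` be the inner boundary of `F`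
and `Δ` the maximum of the reduced solution `w = (L_{F,F})⁻¹ b_F` over `bd` (with `Δ = 0`
if `bd = ∅`), every entry of `x = L⁻¹ b` outside `F` is at most `n³·U·Δ`. -/
theorem boundary_upper_bound {n : ℕ} (U : ℕ) (hU : 1 ≤ U)
    (L : Matrix (Fin n) (Fin n) ℝ) (hL : IsRDDL L) (hSym : L.IsSymm) (hInv : IsUnit L)
    (hint : ∀ i j, ∃ z : ℤ, L i j = (z : ℝ) ∧ |z| ≤ (U : ℤ))
    (b : Fin n → ℝ) (hb : ∀ i, 0 ≤ b i)
    (x : Fin n → ℝ) (hx : x = L⁻¹ *ᵥ b)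
    (F : Finset (Fin n)) (hsupp : ∀ i, 0 < b i → i ∈ F)
    (w : {i // i ∈ F} → ℝ)
    (hw : w = (submatrixOn L F F)⁻¹ *ᵥ fun j : {j // j ∈ F} => b j.val)
    (bd : Finset (Fin n))
    (hbd : bd = F.filter fun i => ∃ j, j ∉ F ∧ L i j ≠ 0)
    (Δ : ℝ)
    (hΔempty : bd = ∅ → Δ = 0)
    (hΔub : ∀ u : {i // i ∈ F}, u.val ∈ bd → w u ≤ Δ)
    (hΔmem : bd.Nonempty → ∃ u : {i // i ∈ F}, u.val ∈ bd ∧ Δ = w u) :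
    ∀ i, i ∉ F → x i ≤ (n : ℝ) ^ 3 * U * Δ := by
  obtain ⟨hdiag, hoff, hdom⟩ := hL
  have hdet : IsUnit L.det := (Matrix.isUnit_iff_isUnit_det L).1 hInv
  have hker : ∀ z, L *ᵥ z = 0 → z = 0 := by
    intro z hz
    have : L⁻¹ *ᵥ (L *ᵥ z) = z := by
      rw [Matrix.mulVec_mulVec, Matrix.nonsing_inv_mul L hdet, Matrix.one_mulVec]
    rw [← this, hz, Matrix.mulVec_zero]
  have hsum : ∀ i, 0 ≤ ∑ j, L i j := by
    intro i
    rw [← Finset.add_sum_erase Finset.univ _ (Finset.mem_univ i)]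
    have h1 := hdom i
    have h2 : -∑ j ∈ Finset.univ.erase i, |L i j| ≤ ∑ j ∈ Finset.univ.erase i, L i j := by
      rw [← Finset.sum_neg_distrib]
      exact Finset.sum_le_sum fun j _ => neg_abs_le _
    linarith
  have hext : ∀ (v : {i // i ∈ F} → ℝ) (a : Fin n),
      (L *ᵥ fun k => if h : k ∈ F then v ⟨k, h⟩ else 0) a
        = ∑ k : {i // i ∈ F}, L a k.val * v k := by
    intro v a
    simp only [mulVec, dotProduct]
    rw [← Finset.sum_subset (Finset.subset_univ F), ← Finset.sum_coe_sort F]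
    · refine Finset.sum_congr rfl fun k _ => ?_
      simp
    · intro k _ hk
      simp [hk]
  -- minimum principle on F
  have hminF : ∀ v : {i // i ∈ F} → ℝ, (∀ u, 0 ≤ (submatrixOn L F F *ᵥ v) u) → ∀ u, 0 ≤ v u := by
    intro v hv u
    have := aux_min L hSym hker hsum hoff (fun k => if h : k ∈ F then v ⟨k, h⟩ else 0) (by
      intro a ha
      by_cases haF : a ∈ F
      · rw [hext]
        exact hv ⟨a, haF⟩
      · simp [haF] at ha) u.val
    simpa using this
  have hunitF : IsUnit (submatrixOn L F F) := by
    rw [← Matrix.mulVec_injective_iff_isUnit]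
    intro v v' hvv
    have hd : submatrixOn L F F *ᵥ (v - v') = 0 := by
      rw [Matrix.mulVec_sub]; exact sub_eq_zero.2 hvv
    have hd' : submatrixOn L F F *ᵥ (v' - v) = 0 := by
      rw [Matrix.mulVec_sub]; exact sub_eq_zero.2 hvv.symm
    have h1 := hminF (v - v') (by intro u; rw [hd]; simp)
    have h2 := hminF (v' - v) (by intro u; rw [hd']; simp)
    ext u
    have := h1 u
    have := h2 u
    simp only [Pi.sub_apply] at *
    linarith
  have hweq : submatrixOn L F F *ᵥ w = fun j : {j // j ∈ F} => b j.val := by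
    rw [hw, Matrix.mulVec_mulVec, Matrix.mul_nonsing_inv _
      ((Matrix.isUnit_iff_isUnit_det _).1 hunitF), Matrix.one_mulVec]
  have hw0 : ∀ u, 0 ≤ w u := hminF w (by intro u; rw [hweq]; exact hb _)
  have hΔ0 : 0 ≤ Δ := by
    rcases bd.eq_empty_or_nonempty with h | h
    · rw [hΔempty h]
    · obtain ⟨u, -, hu⟩ := hΔmem h
      rw [hu]; exact hw0 u
  -- bounds on the inverse
  have hcol : ∀ j, L *ᵥ (fun i => L⁻¹ i j) = Pi.single j 1 := by
    intro j
    have : (fun i => L⁻¹ i j) = L⁻¹ *ᵥ Pi.single j 1 := by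
      rw [Matrix.mulVec_single_one]; rfl
    rw [this, Matrix.mulVec_mulVec, Matrix.mul_nonsing_inv L hdet, Matrix.one_mulVec]
  have hinv0 : ∀ i j, 0 ≤ L⁻¹ i j := by
    intro i j
    refine aux_min L hSym hker hsum hoff (fun i => L⁻¹ i j) (fun a _ => ?_) i
    rw [hcol]
    by_cases h : a = j
    · subst h; simp
    · simp [h]
  have hinvn : ∀ i j, L⁻¹ i j ≤ n := fun i j =>
    aux_bound L hSym hker hsum hoff (fun a c => (hint a c).imp fun z hz => hz.1) j
      (fun i => L⁻¹ i j) (fun i => hinv0 i j) (hcol j) i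
  intro i hi
  set y : Fin n → ℝ := fun k => if h : k ∈ F then w ⟨k, h⟩ else 0 with hy
  set c : Fin n → ℝ := b - L *ᵥ y with hc
  have hxy : x i = (L⁻¹ *ᵥ c) i := by
    rw [hc, Matrix.mulVec_sub, Matrix.mulVec_mulVec, Matrix.nonsing_inv_mul L hdet,
      Matrix.one_mulVec, ← hx]
    simp [hy, hi]
  have hU0 : (0 : ℝ) ≤ U := Nat.cast_nonneg U
  have hcb : ∀ a, c a ≤ n * U * Δ := by
    intro a
    have hR : 0 ≤ (n : ℝ) * U * Δ := by positivity
    have hca : c a = b a - ∑ k : {i // i ∈ F}, L a k.val * w k := by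
      rw [hc, Pi.sub_apply, hy, hext]
    rw [hca]
    by_cases ha : a ∈ F
    · have h1 := congrFun hweq ⟨a, ha⟩
      have h2 : ∑ k : {i // i ∈ F}, L a k.val * w k = b a := h1
      rw [h2, sub_self]; exact hR
    · have hb0 : b a = 0 := le_antisymm (not_lt.1 fun h => ha (hsupp a h)) (hb a)
      rw [hb0, zero_sub, ← Finset.sum_neg_distrib]
      have hterm : ∀ k ∈ (Finset.univ : Finset {i // i ∈ F}), -(L a k.val * w k) ≤ U * Δ := by
        intro k _
        by_cases h0 : L a k.val = 0
        · rw [h0]; simp only [zero_mul, neg_zero]; positivity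
        · have hk : k.val ∈ bd := by
            rw [hbd, Finset.mem_filter]
            refine ⟨k.2, a, ha, ?_⟩
            rw [hSym.apply]; exact h0
          have hLU : -L a k.val ≤ U := by
            obtain ⟨z, hz, hzU⟩ := hint a k.val
            rw [hz]
            have : -z ≤ (U : ℤ) := (neg_le_abs z).trans hzU
            exact_mod_cast this
          rw [← neg_mul]
          exact mul_le_mul hLU (hΔub k hk) (hw0 k) hU0
      have h1 := Finset.sum_le_card_nsmul _ _ _ hterm
      refine h1.trans ?_
      rw [nsmul_eq_mul, mul_assoc]
      refine mul_le_mul_of_nonneg_right ?_ (by positivity)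
      have : F.card ≤ n := by simpa using Finset.card_le_univ F
      simpa using this
  rw [hxy]
  simp only [mulVec, dotProduct]
  have hterm : ∀ a ∈ (Finset.univ : Finset (Fin n)), L⁻¹ i a * c a ≤ n * (n * U * Δ) := by
    intro a _
    exact (mul_le_mul_of_nonneg_left (hcb a) (hinv0 i a)).trans
      (mul_le_mul_of_nonneg_right (hinvn i a) (by positivity))
  refine (Finset.sum_le_card_nsmul _ _ _ hterm).trans (le_of_eq ?_)
  simp
  ring
end

section
/- Let M ∈ ℝ^{n×n} be an RDDL matrix with integer entries in [−U, U] for some integer U ≥ 2, let S ⊆ [n] with S̄ := [n] \ S nonempty, and let α be a positive integer. Assume that for every i ∈ S̄ there exist k ≤ α and indices i = v₀, v₁, …, v_{k−1} all lying in S̄ with M_{v_l, v_{l+1}} < 0 for 0 ≤ l < k−1, such that either M_{v_{k−1}, s} < 0 for some s ∈ S, or ∑_{j=1}^n M_{v_{k−1}, j} > 0. Let A := I − diag(M_{S̄,S̄})^{-1} M_{S̄,S̄}. Then: (a) ‖A^α‖_∞ ≤ 1 − U^{−α}; (b) I − A is invertible and ‖(I − A)^{-1}‖_∞ ≤ (α+1)·U^α;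 (c) M_{S̄,S̄} is invertible and its condition number satisfies κ(M_{S̄,S̄}) := ‖M_{S̄,S̄}‖₂·‖(M_{S̄,S̄})^{-1}‖₂ ≤ 2nU·(α+1)·U^α. -/
open Matrix

section helpers

attribute [local instance] Matrix.linftyOpNormedRing Matrix.linftyOpNormedAlgebra

variable {ι : Type*} [Fintype ι] [DecidableEq ι]

lemma aux_norm_le (A : Matrix ι ι ℝ) (c : ℝ) (hc : 0 ≤ c) (h : ∀ i, ∑ j, |A i j| ≤ c) :
    ‖A‖ ≤ c := by
  lift c to NNReal using hc
  rw [Matrix.linfty_opNorm_def, NNReal.coe_le_coe]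
  refine Finset.sup_le fun i _ => ?_
  rw [← NNReal.coe_le_coe]
  push_cast
  simpa using h i

lemma aux_le_norm (A : Matrix ι ι ℝ) (i : ι) : ∑ j, |A i j| ≤ ‖A‖ := by
  rw [Matrix.linfty_opNorm_def]
  have := Finset.le_sup (f := fun i => ∑ j, ‖A i j‖₊) (Finset.mem_univ i)
  rw [← NNReal.coe_le_coe] at this
  push_cast at this
  simpa using this

lemma aux_l2 (A : Matrix ι ι ℝ) (c : ℝ) (hc : 0 ≤ c) (h : ∀ i, ∑ j, |A i j| ≤ c) :
    ‖Matrix.toEuclideanCLM (𝕜 := ℝ) A‖ ≤ √(Fintype.card ι) * c := by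
  refine ContinuousLinearMap.opNorm_le_bound _ (by positivity) fun x => ?_
  have hx : ∀ j, |x j| ≤ ‖x‖ := fun j => by
    simpa using PiLp.norm_apply_le x j
  have hi : ∀ i, |(Matrix.toEuclideanCLM (𝕜 := ℝ) A x) i| ≤ c * ‖x‖ := fun i => by
    have e : (Matrix.toEuclideanCLM (𝕜 := ℝ) A x) i = ∑ j, A i j * x j := by
      have := Matrix.ofLp_toEuclideanCLM (𝕜 := ℝ) A x
      rw [this]; rfl
    rw [e]
    calc |∑ j, A i j * x j| ≤ ∑ j, |A i j * x j| := Finset.abs_sum_le_sum_abs _ _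
      _ ≤ ∑ j, |A i j| * ‖x‖ := by
        refine Finset.sum_le_sum fun j _ => ?_
        rw [abs_mul]
        exact mul_le_mul_of_nonneg_left (hx j) (abs_nonneg _)
      _ = (∑ j, |A i j|) * ‖x‖ := by rw [Finset.sum_mul]
      _ ≤ c * ‖x‖ := mul_le_mul_of_nonneg_right (h i) (norm_nonneg _)
  rw [EuclideanSpace.norm_eq]
  apply Real.sqrt_le_iff.2
  refine ⟨by positivity, ?_⟩
  calc ∑ i, ‖(Matrix.toEuclideanCLM (𝕜 := ℝ) A x) i‖ ^ 2 ≤ ∑ i : ι, (c * ‖x‖) ^ 2 := by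
        refine Finset.sum_le_sum fun i _ => ?_
        exact pow_le_pow_left₀ (norm_nonneg _) (by simpa using hi i) 2
    _ = (√(Fintype.card ι) * c * ‖x‖) ^ 2 := by
        rw [mul_assoc, mul_pow (√_), Real.sq_sqrt (by positivity)]
        simp

lemma aux_pow_nonneg (A : Matrix ι ι ℝ) (h : ∀ i j, 0 ≤ A i j) (t : ℕ) :
    ∀ i j, 0 ≤ (A ^ t) i j := by
  induction t with
  | zero => intro i j; rw [pow_zero, Matrix.one_apply]; split_ifs <;> norm_num
  | succ t ih =>
    intro i j
    rw [pow_succ, Matrix.mul_apply]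
    exact Finset.sum_nonneg fun k _ => mul_nonneg (ih i k) (h k j)

lemma aux_rowsum_succ (A : Matrix ι ι ℝ) (t : ℕ) (i : ι) :
    ∑ j, (A ^ (t + 1)) i j = ∑ k, A i k * ∑ j, (A ^ t) k j := by
  rw [pow_succ']
  simp only [Matrix.mul_apply, Finset.mul_sum]
  exact Finset.sum_comm

lemma aux_rowsum_anti (A : Matrix ι ι ℝ) (h : ∀ i j, 0 ≤ A i j) (h1 : ∀ i, ∑ j, A i j ≤ 1) :
    ∀ i, Antitone fun t : ℕ => ∑ j, (A ^ t) i j := by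
  have key : ∀ t : ℕ, ∀ i, ∑ j, (A ^ (t + 1)) i j ≤ ∑ j, (A ^ t) i j := by
    intro t
    induction t with
    | zero => intro i; simpa [Matrix.one_apply] using h1 i
    | succ t ih =>
      intro i
      rw [aux_rowsum_succ A (t + 1), aux_rowsum_succ A t]
      exact Finset.sum_le_sum fun k _ => mul_le_mul_of_nonneg_left (ih k) (h i k)
  exact fun i => antitone_nat_of_succ_le fun t => key t i

lemma aux_path (A : Matrix ι ι ℝ) (h : ∀ i j, 0 ≤ A i j) (h1 : ∀ i, ∑ j, A i j ≤ 1)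
    (u : ℝ) (hu : 0 ≤ u) (k : ℕ) : ∀ (v : Fin (k + 1) → ι),
    (∀ l : Fin k, u ≤ A (v l.castSucc) (v l.succ)) →
    ∑ j, A (v (Fin.last k)) j ≤ 1 - u →
    ∑ j, (A ^ (k + 1)) (v 0) j ≤ 1 - u ^ (k + 1) := by
  induction k with
  | zero => intro v _ hl; simpa using hl
  | succ k ih =>
    intro v hv hl
    have h2 := ih (fun l => v l.succ) (fun l => by simpa using hv l.succ) (by simpa using hl)
    rw [aux_rowsum_succ]
    have hle : ∀ j, ∑ x, (A ^ (k + 1)) j x ≤ 1 := fun j => by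
      have := aux_rowsum_anti A h h1 j (Nat.zero_le (k + 1))
      simpa [Matrix.one_apply] using this
    set w := v (Fin.succ 0) with hw
    have hA := hv 0
    simp only [Fin.castSucc_zero] at hA
    calc ∑ j, A (v 0) j * ∑ x, (A ^ (k + 1)) j x
        ≤ ∑ j, (A (v 0) j - if j = w then A (v 0) j * u ^ (k + 1) else 0) := by
          refine Finset.sum_le_sum fun j _ => ?_
          split_ifs with hj
          · subst hj
            have := mul_le_mul_of_nonneg_left h2 (h (v 0) w)
            linarith
          · have := mul_le_mul_of_nonneg_left (hle j) (h (v 0) j)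
            linarith
      _ = ∑ j, A (v 0) j - A (v 0) w * u ^ (k + 1) := by
          rw [Finset.sum_sub_distrib]; simp
      _ ≤ 1 - u ^ (k + 1 + 1) := by
          have e : u * u ^ (k + 1) ≤ A (v 0) w * u ^ (k + 1) :=
            mul_le_mul_of_nonneg_right hA (by positivity)
          have := h1 (v 0)
          rw [pow_succ' u (k + 1)]
          linarith

lemma aux_norm_one_le : ‖(1 : Matrix ι ι ℝ)‖ ≤ 1 :=
  aux_norm_le _ _ zero_le_one fun i => by simp [Matrix.one_apply, apply_ite]

lemma aux_inv (A : Matrix ι ι ℝ) (hA1 : ∀ i, ∑ j, |A i j| ≤ 1) (α : ℕ) (K : ℝ) (hK : 1 ≤ K)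
    (h : ∀ i, ∑ j, |(A ^ α) i j| ≤ 1 - K⁻¹) :
    IsUnit (1 - A) ∧ ∀ i, ∑ j, |(1 - A)⁻¹ i j| ≤ α * K := by
  have hKp : 0 < K := by linarith
  have hn1 : ‖A‖ ≤ 1 := aux_norm_le _ _ zero_le_one hA1
  have hn : ‖A ^ α‖ ≤ 1 - K⁻¹ := aux_norm_le _ _ (by
    have := inv_le_one_of_one_le₀ hK
    linarith) h
  have hlt : ‖A ^ α‖ < 1 := by
    have : 0 < K⁻¹ := by positivity
    linarith
  have hu : IsUnit (1 - A ^ α) := isUnit_one_sub_of_norm_lt_one hlt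
  have hg : (1 - A) * ∑ t ∈ Finset.range α, A ^ t = 1 - A ^ α := mul_neg_geom_sum A α
  have hu1 : IsUnit (1 - A) := by
    rw [Matrix.isUnit_iff_isUnit_det] at hu ⊢
    rw [← hg, Matrix.det_mul] at hu
    exact isUnit_of_mul_isUnit_left hu
  refine ⟨hu1, fun i => (aux_le_norm _ i).trans ?_⟩
  have hd := (Matrix.isUnit_iff_isUnit_det _).1 hu1
  have hB : (1 - A)⁻¹ = ∑ t ∈ Finset.range α, A ^ t + (1 - A)⁻¹ * A ^ α := by
    have : (1 - A)⁻¹ * ((1 - A) * ∑ t ∈ Finset.range α, A ^ t) = (1 - A)⁻¹ * (1 - A ^ α) := by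
      rw [hg]
    rw [Matrix.nonsing_inv_mul_cancel_left _ _ hd, mul_sub, mul_one] at this
    rw [this]; abel
  have hpow : ∀ t : ℕ, ‖A ^ t‖ ≤ 1 := by
    intro t
    induction t with
    | zero => simpa using aux_norm_one_le
    | succ t ih =>
      rw [pow_succ]
      exact (norm_mul_le _ _).trans (mul_le_one₀ ih (norm_nonneg _) hn1)
  have hs : ‖∑ t ∈ Finset.range α, A ^ t‖ ≤ α := by
    refine (norm_sum_le _ _).trans ?_
    calc ∑ t ∈ Finset.range α, ‖A ^ t‖ ≤ ∑ t ∈ Finset.range α, (1 : ℝ) :=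
          Finset.sum_le_sum fun t _ => hpow t
      _ = α := by simp
  have hb : ‖(1 - A)⁻¹‖ ≤ α + ‖(1 - A)⁻¹‖ * (1 - K⁻¹) := by
    calc ‖(1 - A)⁻¹‖ = ‖∑ t ∈ Finset.range α, A ^ t + (1 - A)⁻¹ * A ^ α‖ := by rw [← hB]
      _ ≤ α + ‖(1 - A)⁻¹‖ * (1 - K⁻¹) := (norm_add_le _ _).trans (add_le_add hs
          ((norm_mul_le _ _).trans (mul_le_mul_of_nonneg_left hn (norm_nonneg _))))
  have h3 : ‖(1 - A)⁻¹‖ * K⁻¹ ≤ α := by linarith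
  rwa [← div_eq_mul_inv, div_le_iff₀ hKp] at h3

end helpers

/-- If from every vertex of `S̄ = [n] \ S` there is a short (length `≤ α`) path inside `S̄`
reaching `S` or the dummy vertex, then for `A = I - diag(M_{S̄,S̄})⁻¹ M_{S̄,S̄}`:
(a) `‖A^α‖_∞ ≤ 1 - U^{-α}` (every row of `A^α` has absolute sum at most `1 - U^{-α}`);
(b) `I - A` is invertible with `‖(I-A)⁻¹‖_∞ ≤ (α+1)·U^α`;
(c) `M_{S̄,S̄}` is invertible with condition number at most `2nU(α+1)U^α`. -/
theorem submatrix_condition_number_bound {n : ℕ} (U : ℕ) (hU : 2 ≤ U)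
    (M : Matrix (Fin n) (Fin n) ℝ) (hM : IsRDDL M)
    (hint : ∀ i j, ∃ z : ℤ, M i j = (z : ℝ) ∧ |z| ≤ (U : ℤ))
    (S : Finset (Fin n)) (hSbar : (Sᶜ : Finset (Fin n)).Nonempty)
    (α : ℕ) (hα : 1 ≤ α)
    (hpath : ∀ i ∈ Sᶜ, ∃ k : ℕ, k < α ∧ ∃ v : Fin (k + 1) → Fin n,
      v 0 = i ∧ (∀ l, v l ∈ (Sᶜ : Finset (Fin n))) ∧
      (∀ l : Fin k, M (v l.castSucc) (v l.succ) < 0) ∧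
      ((∃ s ∈ S, M (v (Fin.last k)) s < 0) ∨ 0 < ∑ j, M (v (Fin.last k)) j))
    (A : Matrix {i // i ∈ (Sᶜ : Finset (Fin n))} {i // i ∈ (Sᶜ : Finset (Fin n))} ℝ)
    (hA : A = 1 - (Matrix.diagonal fun i : {i // i ∈ (Sᶜ : Finset (Fin n))} =>
      (M i.val i.val)⁻¹) * submatrixOn M Sᶜ Sᶜ) :
    (∀ i, ∑ j, |(A ^ α) i j| ≤ 1 - ((U : ℝ) ^ α)⁻¹) ∧
    (IsUnit (1 - A) ∧ ∀ i, ∑ j, |(1 - A)⁻¹ i j| ≤ ((α : ℝ) + 1) * (U : ℝ) ^ α) ∧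
    (IsUnit (submatrixOn M Sᶜ Sᶜ) ∧
      ‖Matrix.toEuclideanCLM (𝕜 := ℝ) (submatrixOn M Sᶜ Sᶜ)‖ *
        ‖Matrix.toEuclideanCLM (𝕜 := ℝ) (submatrixOn M Sᶜ Sᶜ)⁻¹‖ ≤
        2 * (n : ℝ) * U * ((α : ℝ) + 1) * (U : ℝ) ^ α) := by
  obtain ⟨hpos, hoff, hdom⟩ := hM
  have hU0 : (0 : ℝ) < U := by positivity
  have hU1 : (1 : ℝ) ≤ U := by exact_mod_cast (by omega : 1 ≤ U)
  have hN : ∀ i j, submatrixOn M Sᶜ Sᶜ i j = M i.val j.val := fun i j => rfl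
  have hAij : ∀ i j, A i j = (if i = j then 1 else 0) - (M i.val i.val)⁻¹ * M i.val j.val := by
    intro i j
    rw [hA, Matrix.sub_apply, Matrix.diagonal_mul, hN, Matrix.one_apply]
  have habs : ∀ i j, |M i j| ≤ U := by
    intro i j
    obtain ⟨z, hz, hz2⟩ := hint i j
    rw [hz]; exact_mod_cast hz2
  have hdiagU : ∀ i, M i i ≤ U := fun i => (le_abs_self _).trans (habs i i)
  have hdiag1 : ∀ i, 1 ≤ M i i := by
    intro i
    obtain ⟨z, hz, -⟩ := hint i i
    have := hpos i
    rw [hz] at this ⊢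
    exact_mod_cast (by exact_mod_cast this : 0 < z)
  have hoff1 : ∀ i j, M i j < 0 → M i j ≤ -1 := by
    intro i j h
    obtain ⟨z, hz, -⟩ := hint i j
    rw [hz] at h ⊢
    have : z < 0 := by exact_mod_cast h
    exact_mod_cast (by omega : z ≤ -1)
  have hinv : ∀ i, (U : ℝ)⁻¹ ≤ (M i i)⁻¹ := fun i => inv_anti₀ (hpos i) (hdiagU i)
  have hA0 : ∀ i j, 0 ≤ A i j := by
    intro i j
    rw [hAij]
    split_ifs with hij
    · subst hij
      rw [inv_mul_cancel₀ (hpos _).ne']; norm_num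
    · have h1 := hoff i.val j.val (fun h => hij (Subtype.ext h))
      have h2 : 0 < (M i.val i.val)⁻¹ := inv_pos.2 (hpos _)
      nlinarith
  have hrow : ∀ i, ∑ j, A i j = 1 - (M i.val i.val)⁻¹ * ∑ j ∈ Sᶜ, M i.val j := by
    intro i
    simp only [hAij, Finset.sum_sub_distrib, ← Finset.mul_sum]
    rw [Finset.sum_ite_eq]
    simp only [Finset.mem_univ, if_true]
    rw [← Finset.sum_coe_sort Sᶜ (fun j => M i.val j)]
  have hfull : ∀ i, 0 ≤ ∑ j, M i j := by
    intro i
    rw [← Finset.add_sum_erase _ _ (Finset.mem_univ i)]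
    have h1 : ∑ j ∈ Finset.univ.erase i, M i j = - ∑ j ∈ Finset.univ.erase i, |M i j| := by
      rw [← Finset.sum_neg_distrib]
      refine Finset.sum_congr rfl fun j hj => ?_
      rw [abs_of_nonpos (hoff i j (Finset.ne_of_mem_erase hj).symm)]; ring
    have := hdom i
    linarith
  have hsplit : ∀ i, ∑ j ∈ Sᶜ, M i j = ∑ j, M i j - ∑ j ∈ S, M i j := by
    intro i
    rw [← Finset.sum_add_sum_compl S (fun j => M i j)]; ring
  have hSneg : ∀ i ∈ Sᶜ, ∀ j ∈ S, M i j ≤ 0 := by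
    intro i hi j hj
    refine hoff i j ?_
    rintro rfl
    exact (Finset.mem_compl.1 hi) hj
  have hSsum : ∀ i ∈ Sᶜ, ∑ j ∈ S, M i j ≤ 0 := fun i hi => Finset.sum_nonpos (hSneg i hi)
  have hrow1 : ∀ i, ∑ j, A i j ≤ 1 := by
    intro i
    rw [hrow, hsplit]
    have h1 := hfull i.val
    have h2 := hSsum i.val i.2
    have h3 : 0 < (M i.val i.val)⁻¹ := inv_pos.2 (hpos _)
    nlinarith
  have hlast : ∀ i : {i // i ∈ (Sᶜ : Finset (Fin n))},
      ((∃ s ∈ S, M i.val s < 0) ∨ 0 < ∑ j, M i.val j) → ∑ j, A i j ≤ 1 - (U : ℝ)⁻¹ := by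
    intro i hi
    have hp : 0 < ∑ j ∈ Sᶜ, M i.val j := by
      rw [hsplit]
      have h1 := hfull i.val
      have h2 := hSsum i.val i.2
      rcases hi with ⟨s, hs, hsn⟩ | hi
      · have : ∑ j ∈ S, M i.val j < 0 :=
          Finset.sum_neg' (hSneg i.val i.2) ⟨s, hs, hsn⟩
        linarith
      · linarith
    have hp1 : 1 ≤ ∑ j ∈ Sᶜ, M i.val j := by
      choose z hz _ using hint i.val
      simp only [hz] at hp ⊢
      exact_mod_cast (by exact_mod_cast hp : 0 < ∑ j ∈ Sᶜ, z j)
    rw [hrow]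
    have h3 := hinv i.val
    have h4 : 0 < (U : ℝ)⁻¹ := by positivity
    nlinarith
  have ha : ∀ i, ∑ j, |(A ^ α) i j| ≤ 1 - ((U : ℝ) ^ α)⁻¹ := by
    intro i
    obtain ⟨k, hk, v, hv0, hvS, hvM, hvl⟩ := hpath i.val i.2
    have h1 := aux_path A hA0 hrow1 (U : ℝ)⁻¹ (by positivity) k (fun l => ⟨v l, hvS l⟩)
      (by
        intro l
        have hneg := hvM l
        have hne : v l.castSucc ≠ v l.succ := by
          intro h
          rw [← h] at hneg
          exact absurd (hpos _) (not_lt.2 hneg.le)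
        rw [hAij, if_neg (fun h => hne (congrArg Subtype.val h))]
        have h2 := hoff1 _ _ hneg
        have h3 := hinv (v l.castSucc)
        have h4 : 0 < (U : ℝ)⁻¹ := by positivity
        simp only
        nlinarith)
      (hlast _ hvl)
    have hi : (⟨v 0, hvS 0⟩ : {i // i ∈ (Sᶜ : Finset (Fin n))}) = i := Subtype.ext hv0
    simp only [hi] at h1
    have h2 := aux_rowsum_anti A hA0 hrow1 i (show k + 1 ≤ α from hk)
    simp only at h2
    simp only [abs_of_nonneg (aux_pow_nonneg A hA0 α _ _)]
    have h3 : ((U : ℝ)⁻¹) ^ α ≤ ((U : ℝ)⁻¹) ^ (k + 1) :=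
      pow_le_pow_of_le_one (by positivity) (inv_le_one_of_one_le₀ hU1) hk
    rw [← inv_pow]
    linarith
  have hb := aux_inv A (fun i => by simpa only [abs_of_nonneg (hA0 _ _)] using hrow1 i) α
    ((U : ℝ) ^ α) (one_le_pow₀ hU1) ha
  obtain ⟨hb1, hb2⟩ := hb
  have hUα : (0 : ℝ) < (U : ℝ) ^ α := by positivity
  have h1A : 1 - A = (Matrix.diagonal fun i : {i // i ∈ (Sᶜ : Finset (Fin n))} =>
      (M i.val i.val)⁻¹) * submatrixOn M Sᶜ Sᶜ := by rw [hA]; abel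
  have hNu : IsUnit (submatrixOn M Sᶜ Sᶜ) := by
    have h := hb1
    rw [Matrix.isUnit_iff_isUnit_det] at h ⊢
    rw [h1A, Matrix.det_mul] at h
    exact isUnit_of_mul_isUnit_right h
  refine ⟨ha, ⟨hb1, fun i => (hb2 i).trans (by nlinarith)⟩, hNu, ?_⟩
  have hNinv : (submatrixOn M Sᶜ Sᶜ)⁻¹ = (1 - A)⁻¹ *
      (Matrix.diagonal fun i : {i // i ∈ (Sᶜ : Finset (Fin n))} => (M i.val i.val)⁻¹) := by
    apply Matrix.inv_eq_left_inv
    rw [mul_assoc, ← h1A]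
    exact Matrix.nonsing_inv_mul _ ((Matrix.isUnit_iff_isUnit_det _).1 hb1)
  have hn1 : ∀ i, ∑ j, |submatrixOn M Sᶜ Sᶜ i j| ≤ 2 * U := by
    intro i
    simp only [hN]
    rw [Finset.sum_coe_sort Sᶜ (fun j => |M i.val j|)]
    calc ∑ j ∈ Sᶜ, |M i.val j| ≤ ∑ j, |M i.val j| :=
          Finset.sum_le_sum_of_subset_of_nonneg (Finset.subset_univ _) fun _ _ _ => abs_nonneg _
      _ ≤ 2 * U := by
          rw [← Finset.add_sum_erase _ _ (Finset.mem_univ i.val)]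
          have h1 := hdom i.val
          have h2 := habs i.val i.val
          have h3 := hdiagU i.val
          linarith
  have hn2 : ∀ i, ∑ j, |(submatrixOn M Sᶜ Sᶜ)⁻¹ i j| ≤ α * (U : ℝ) ^ α := by
    intro i
    refine le_trans (Finset.sum_le_sum fun j _ => ?_) (hb2 i)
    rw [hNinv, Matrix.mul_diagonal, abs_mul]
    refine mul_le_of_le_one_right (abs_nonneg _) ?_
    rw [abs_of_pos (inv_pos.2 (hpos _))]
    exact inv_le_one_of_one_le₀ (hdiag1 _)
  have e1 := aux_l2 _ _ (by positivity) hn1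
  have e2 := aux_l2 _ _ (by positivity) hn2
  have hcard : (Fintype.card {i // i ∈ (Sᶜ : Finset (Fin n))} : ℝ) ≤ n := by
    rw [Fintype.card_coe]
    exact_mod_cast (Finset.card_le_univ _).trans (by simp)
  refine (mul_le_mul e1 e2 (norm_nonneg _) (by positivity)).trans ?_
  generalize (Fintype.card {i // i ∈ (Sᶜ : Finset (Fin n))} : ℝ) = m at *
  have hm : √m * √m ≤ n := by
    rcases le_total 0 m with h | h
    · rwa [Real.mul_self_sqrt h]
    · rw [Real.sqrt_eq_zero_of_nonpos h]; simp
  calc √m * (2 * U) * (√m * (α * (U : ℝ) ^ α)) = (√m * √m) * (2 * U * (α * (U : ℝ) ^ α)) := by ring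
    _ ≤ n * (2 * U * (((α : ℝ) + 1) * (U : ℝ) ^ α)) := by
        gcongr
        linarith
    _ = _ := by ring
end

section
/- Let δ ∈ (0,1), let n, U > 3, and let M ∈ ℝ^{n×n} be an invertible RDDL matrix with integer entries in [−U, U]. Let S be a random subset of [n] in which each index i ∈ [n] is included independently with probability n^{−1/2}, and set S̄ := [n] \ S. Then with probability at least 1 − δ, the condition number of the (necessarily invertible) principal submatrix M_{S̄,S̄} satisfies κ(M_{S̄,S̄}) := ‖M_{S̄,S̄}‖₂·‖(M_{S̄,S̄})^{-1}‖₂ ≤ exp(6·√n·(ln U)·ln(n/δ)), where by convention the condition number of the empty matrix (when S̄ = ∅) is 1. -/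
open Matrix MeasureTheory

open Classical in
/-- The ℓ₂ condition number `‖A‖₂ · ‖A⁻¹‖₂` of a square real matrix, with the convention
that the condition number of the empty matrix is `1`. -/
noncomputable def condNum {ι : Type*} [Fintype ι] [DecidableEq ι] (A : Matrix ι ι ℝ) : ℝ :=
  if Nonempty ι then
    ‖Matrix.toEuclideanCLM (𝕜 := ℝ) A‖ * ‖Matrix.toEuclideanCLM (𝕜 := ℝ) A⁻¹‖
  else 1


/-- `Rch M ω k i`: from `i` one reaches the removed set (or the sink) within `k` steps. -/
def Rch {n : ℕ} (M : Matrix (Fin n) (Fin n) ℝ) (ω : Fin n → Bool) : ℕ → Fin n → Prop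
  | 0, i => ω i = true
  | k + 1, i => Rch M ω k i ∨ 0 < ∑ j, M i j ∨ ∃ j, j ≠ i ∧ M i j ≠ 0 ∧ Rch M ω k j

lemma Rch_mono {n : ℕ} (M : Matrix (Fin n) (Fin n) ℝ) (ω : Fin n → Bool) {k l : ℕ} (h : k ≤ l)
    (i : Fin n) (hi : Rch M ω k i) : Rch M ω l i := by
  induction l, h using Nat.le_induction with
  | base => exact hi
  | succ l _ ih => exact Or.inl ih

lemma rowsum_nonneg {n : ℕ} (M : Matrix (Fin n) (Fin n) ℝ) (hM : IsRDDL M) (i : Fin n) :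
    0 ≤ ∑ j, M i j := by
  rw [← Finset.add_sum_erase _ _ (Finset.mem_univ i)]
  have h1 := hM.2.2 i
  have h2 : ∑ j ∈ Finset.univ.erase i, -|M i j| ≤ ∑ j ∈ Finset.univ.erase i, M i j :=
    Finset.sum_le_sum fun j _ => neg_abs_le _
  rw [Finset.sum_neg_distrib] at h2
  linarith

lemma exists_Rch {n : ℕ} (M : Matrix (Fin n) (Fin n) ℝ) (hM : IsRDDL M) (hInv : IsUnit M)
    (i : Fin n) : ∃ k, Rch M (fun _ => false) k i := by
  classical
  by_contra hi
  set p : Fin n → Prop := fun i => ∃ k, Rch M (fun _ => false) k i with hp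
  have hcl : ∀ i, ¬ p i → ∀ j, p j → M i j = 0 := by
    intro i hi j ⟨k, hk⟩
    by_contra h
    refine hi ⟨k + 1, Or.inr (Or.inr ⟨j, ?_, h, hk⟩)⟩
    rintro rfl
    exact hi ⟨k, hk⟩
  have hdet := Matrix.twoBlockTriangular_det M p hcl
  have hz : (Matrix.toSquareBlockProp M fun i => ¬ p i).det = 0 := by
    rw [← Matrix.exists_mulVec_eq_zero_iff]
    refine ⟨fun _ => 1, ?_, ?_⟩
    · intro h
      have := congrFun h ⟨i, hi⟩
      simp at this
    · funext ⟨a, ha⟩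
      have hs : ∑ j, M a j = 0 := by
        refine le_antisymm ?_ (rowsum_nonneg M hM a)
        by_contra h
        exact ha ⟨1, Or.inr (Or.inl (not_le.mp h))⟩
      simp only [Matrix.mulVec, dotProduct, Matrix.toSquareBlockProp_def, Matrix.of_apply, mul_one,
        Pi.zero_apply]
      rw [← hs, ← Fintype.sum_subtype_add_sum_subtype (fun j => ¬ p j) (fun j => M a j)]
      have : ∑ j : {j // ¬ ¬ p j}, M a j = 0 :=
        Finset.sum_eq_zero fun j _ => hcl a ha j (not_not.mp j.2)
      rw [this, add_zero]
  rw [hz, mul_zero] at hdet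
  rw [Matrix.isUnit_iff_isUnit_det, hdet] at hInv
  exact not_isUnit_zero hInv

lemma path_lemma {n : ℕ} (M : Matrix (Fin n) (Fin n) ℝ) (k : ℕ) :
    ∀ (L : ℕ) (i : Fin n), Rch M (fun _ => false) k i →
      (∀ ω, Rch M ω L i) ∨ ∃ T : Finset (Fin n), T.card = L ∧
        (∀ v ∈ T, Rch M (fun _ => false) k v) ∧
        ∀ ω : Fin n → Bool, (∃ v ∈ T, ω v = true) → Rch M ω L i := by
  classical
  induction k with
  | zero => intro L i h; simp [Rch] at h
  | succ k ih =>
    intro L i h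
    by_cases hk : Rch M (fun _ => false) k i
    · rcases ih L i hk with h | ⟨T, h1, h2, h3⟩
      · exact Or.inl h
      · exact Or.inr ⟨T, h1, fun v hv => Or.inl (h2 v hv), h3⟩
    · cases L with
      | zero => exact Or.inr ⟨∅, rfl, by simp, by simp⟩
      | succ L =>
        rcases h with h | h | ⟨j, hji, hM, hj⟩
        · exact absurd h hk
        · exact Or.inl fun ω => Or.inr (Or.inl h)
        · rcases ih L j hj with h' | ⟨T, h1, h2, h3⟩
          · exact Or.inl fun ω => Or.inr (Or.inr ⟨j, hji, hM, h' ω⟩)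
          · refine Or.inr ⟨insert i T, ?_, ?_, ?_⟩
            · rw [Finset.card_insert_of_notMem (fun hi => hk (h2 i hi)), h1]
            · intro v hv
              rcases Finset.mem_insert.mp hv with rfl | hv
              · exact Or.inr (Or.inr ⟨j, hji, hM, hj⟩)
              · exact Or.inl (h2 v hv)
            · rintro ω ⟨v, hv, hω⟩
              rcases Finset.mem_insert.mp hv with rfl | hv
              · exact Rch_mono M ω (Nat.zero_le _) _ hω
              · exact Or.inr (Or.inr ⟨j, hji, hM, h3 ω ⟨v, hv, hω⟩⟩)

/-- barrier vector -/
lemma barrier {n : ℕ} (U : ℕ) (hU : 3 < U) (M : Matrix (Fin n) (Fin n) ℝ) (hM : IsRDDL M)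
    (hint : ∀ i j, ∃ z : ℤ, M i j = (z : ℝ) ∧ |z| ≤ (U : ℤ))
    (ω : Fin n → Bool) (L : ℕ) (hL : ∀ i, Rch M ω L i) :
    ∃ x : Fin n → ℝ, (∀ i, ω i = true → x i = 0) ∧ (∀ i, ω i = false → 0 < x i) ∧
      (∀ i, x i ≤ (U : ℝ) ^ L) ∧ ∀ i, ω i = false → 1 ≤ ∑ j, M i j * x j := by
  classical
  let g : ℕ → ℝ := fun d => ∑ k ∈ Finset.range (L - d), (U : ℝ) ^ k
  have hU0 : (4 : ℝ) ≤ U := by exact_mod_cast hU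
  have hg0 : ∀ d, 0 ≤ g d := fun d => Finset.sum_nonneg fun k _ => by positivity
  have hganti : ∀ a b, a ≤ b → g b ≤ g a := by
    intro a b hab
    apply Finset.sum_le_sum_of_subset_of_nonneg
    · apply Finset.range_mono; omega
    · intros; positivity
  have hgrec : ∀ d, d + 1 ≤ L → g d = 1 + U * g (d + 1) := by
    intro d hd
    simp only [g]
    obtain ⟨m, rfl⟩ := Nat.exists_eq_add_of_le hd
    have e1 : d + 1 + m - d = m + 1 := by omega
    have e2 : d + 1 + m - (d + 1) = m := by omega
    rw [e1, e2, Finset.sum_range_succ', Finset.mul_sum]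
    simp only [pow_zero, pow_succ']
    ring
  have hgtop : g 0 ≤ (U : ℝ) ^ L := by
    simp only [g, Nat.sub_zero]
    clear hgrec hganti hg0 hL g
    induction L with
    | zero => simp
    | succ L ih =>
      rw [Finset.sum_range_succ, pow_succ]
      have : (0 : ℝ) < (U : ℝ) ^ L := by positivity
      nlinarith
  have hex : ∀ i, ∃ k, Rch M ω k i := fun i => ⟨L, hL i⟩
  let d : Fin n → ℕ := fun i => Nat.find (hex i)
  have hdL : ∀ i, d i ≤ L := fun i => Nat.find_min' _ (hL i)
  have hd : ∀ i, Rch M ω (d i) i := fun i => Nat.find_spec (hex i)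
  have hdmin : ∀ i k, Rch M ω k i → d i ≤ k := fun i k h => Nat.find_min' _ h
  have hdpos : ∀ i, ω i = false → 1 ≤ d i := by
    intro i hi
    by_contra h
    have h0 : d i = 0 := by omega
    have := hd i
    rw [h0] at this
    simp [Rch, hi] at this
  have hint1 : ∀ i j, M i j ≠ 0 → 1 ≤ |M i j| := by
    intro i j h
    obtain ⟨z, hz, _⟩ := hint i j
    rw [hz] at h ⊢
    have : z ≠ 0 := by exact_mod_cast h
    exact_mod_cast Int.one_le_abs this
  have hdiag : ∀ i, M i i ≤ U := by
    intro i
    obtain ⟨z, hz, hz'⟩ := hint i i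
    rw [hz]
    exact_mod_cast (le_abs_self z).trans hz'
  refine ⟨fun i => g 0 - g (d i), ?_, ?_, ?_, ?_⟩
  · intro i hi
    have : d i = 0 := Nat.le_zero.mp (hdmin i 0 hi)
    simp [this]
  · intro i hi
    have h1 := hdpos i hi
    have h2 := hdL i
    have h3 := hgrec 0 (by omega)
    have h4 := hganti 1 (d i) h1
    have h5 := hg0 (0 + 1)
    rw [zero_add] at h3 h5
    show 0 < g 0 - g (d i)
    nlinarith
  · intro i
    have := hg0 (d i)
    show g 0 - g (d i) ≤ _
    linarith
  · intro i hi
    have h1 := hdpos i hi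
    obtain ⟨e, he⟩ : ∃ e, d i = e + 1 := ⟨d i - 1, by omega⟩
    have hrec := hgrec e (by have := hdL i; omega)
    have hexp : ∑ j, M i j * (g 0 - g (d j)) =
        g 0 * ∑ j, M i j - M i i * g (e + 1) + ∑ j ∈ Finset.univ.erase i, (- M i j) * g (d j) := by
      have : ∑ j, M i j * g (d j) = M i i * g (e + 1) +
          ∑ j ∈ Finset.univ.erase i, M i j * g (d j) := by
        rw [← Finset.add_sum_erase _ _ (Finset.mem_univ i), he]
      simp only [mul_sub, Finset.sum_sub_distrib, this, neg_mul, Finset.sum_neg_distrib,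
        ← Finset.sum_mul]
      ring
    have hnn : ∀ j ∈ Finset.univ.erase i, 0 ≤ (- M i j) * g (d j) := by
      intro j hj
      have := hM.2.1 i j (Finset.ne_of_mem_erase hj).symm
      exact mul_nonneg (by linarith) (hg0 _)
    have hUg : M i i * g (e + 1) ≤ U * g (e + 1) :=
      mul_le_mul_of_nonneg_right (hdiag i) (hg0 _)
    have hrs := rowsum_nonneg M hM i
    show 1 ≤ ∑ j, M i j * (g 0 - g (d j))
    rw [hexp]
    have hdi := hd i
    rw [he] at hdi
    rcases hdi with h | h | ⟨j, hji, hMij, hj⟩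
    · have := hdmin i e h
      omega
    · have hs1 : 1 ≤ ∑ j, M i j := by
        choose z hz _ using hint i
        simp only [hz] at h ⊢
        have h' : 0 < ∑ j, z j := by exact_mod_cast h
        exact_mod_cast h'
      have h2 := Finset.sum_nonneg hnn
      have h3 := hganti 0 e (Nat.zero_le _)
      have h4 := hg0 0
      nlinarith
    · have hjm : j ∈ Finset.univ.erase i := Finset.mem_erase.mpr ⟨hji, Finset.mem_univ _⟩
      have h2 := Finset.single_le_sum hnn hjm
      have h3 := hganti (d j) e (hdmin j e hj)
      have h4 : 1 ≤ - M i j := by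
        have := hint1 i j hMij
        rwa [abs_of_nonpos (hM.2.1 i j hji.symm)] at this
      have h5 := hg0 (d j)
      have h6 := mul_nonneg (hg0 0) hrs
      nlinarith

lemma max_principle_s15 {ι : Type*} [Fintype ι] (A : Matrix ι ι ℝ)
    (hoff : ∀ i j, i ≠ j → A i j ≤ 0) (hdiag : ∀ i, 0 < A i i)
    (x : ι → ℝ) (hx : ∀ i, 0 < x i) (hAx : ∀ i, 1 ≤ ∑ j, A i j * x j)
    (z : ι → ℝ) (hz : ∀ i, |∑ j, A i j * z j| ≤ 1) (i : ι) : |z i| ≤ x i := by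
  classical
  have : Nonempty ι := ⟨i⟩
  obtain ⟨m, hm⟩ := Finite.exists_max (fun j => |z j| / x j)
  set r := |z m| / x m with hr
  have hr0 : 0 ≤ r := div_nonneg (abs_nonneg _) (hx m).le
  have hall : ∀ j, |z j| ≤ r * x j := fun j => (div_le_iff₀ (hx j)).mp (hm j)
  have hzm : |z m| = r * x m := by rw [hr, div_mul_cancel₀ _ (hx m).ne']
  have key : r * ∑ j, A m j * x j ≤ |∑ j, A m j * z j| := by
    rw [← Finset.add_sum_erase _ _ (Finset.mem_univ m),
      ← Finset.add_sum_erase _ (fun j => A m j * z j) (Finset.mem_univ m)]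
    have h1 : |A m m * z m| = r * (A m m * x m) := by
      rw [abs_mul, hzm, abs_of_pos (hdiag m)]; ring
    have h2 : |∑ j ∈ Finset.univ.erase m, A m j * z j| ≤
        - (r * ∑ j ∈ Finset.univ.erase m, A m j * x j) := by
      refine (Finset.abs_sum_le_sum_abs _ _).trans ?_
      rw [Finset.mul_sum, ← Finset.sum_neg_distrib]
      refine Finset.sum_le_sum fun j hj => ?_
      have h3 := hoff m j (Finset.ne_of_mem_erase hj).symm
      rw [abs_mul, abs_of_nonpos h3]
      have := hall j
      nlinarith
    have h3 := abs_sub_abs_le_abs_sub (A m m * z m) (-∑ j ∈ Finset.univ.erase m, A m j * z j)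
    rw [abs_neg, sub_neg_eq_add] at h3
    rw [mul_add]
    linarith
  have hr1 : r ≤ 1 := by
    have := hAx m
    have := hz m
    nlinarith
  have := hall i
  have := hx i
  nlinarith

lemma opnorm_le {ι : Type*} [Fintype ι] [DecidableEq ι] (A : Matrix ι ι ℝ) (c : ℝ) (hc : 0 ≤ c)
    (h : ∀ i j, |A i j| ≤ c) :
    ‖Matrix.toEuclideanCLM (𝕜 := ℝ) A‖ ≤ Fintype.card ι * c := by
  refine ContinuousLinearMap.opNorm_le_bound _ (by positivity) fun v => ?_
  rw [← sq_le_sq₀ (norm_nonneg _) (by positivity), mul_pow, EuclideanSpace.real_norm_sq_eq,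
    EuclideanSpace.real_norm_sq_eq]
  have h1 : ∀ i, (Matrix.toEuclideanCLM (𝕜 := ℝ) A v) i = ∑ j, A i j * v j := by
    intro i
    simp [Matrix.ofLp_toEuclideanCLM, Matrix.mulVec, dotProduct]
  have h2 : ∀ i, (∑ j, A i j * v j) ^ 2 ≤ (Fintype.card ι * c ^ 2) * ∑ j, v j ^ 2 := by
    intro i
    refine (Finset.sum_mul_sq_le_sq_mul_sq _ _ _).trans ?_
    refine mul_le_mul_of_nonneg_right ?_ (Finset.sum_nonneg fun _ _ => sq_nonneg _)
    calc ∑ j, A i j ^ 2 ≤ ∑ j : ι, c ^ 2 :=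
          Finset.sum_le_sum fun j _ => sq_le_sq.mpr (by rw [abs_of_nonneg hc]; exact h i j)
      _ = _ := by simp
  calc _ = ∑ i, (∑ j, A i j * v j) ^ 2 := by simp only [h1]
    _ ≤ ∑ i : ι, (Fintype.card ι * c ^ 2) * ∑ j, v j ^ 2 := Finset.sum_le_sum fun i _ => h2 i
    _ = _ := by simp; ring

lemma cond_bound {n : ℕ} (hn : 3 < n) (U : ℕ) (hU : 3 < U)
    (M : Matrix (Fin n) (Fin n) ℝ) (hM : IsRDDL M)
    (hint : ∀ i j, ∃ z : ℤ, M i j = (z : ℝ) ∧ |z| ≤ (U : ℤ))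
    (ω : Fin n → Bool) (L : ℕ) (hL : ∀ i, Rch M ω L i) :
    condNum (M.submatrix (Subtype.val : {i // ω i = false} → Fin n)
          (Subtype.val : {i // ω i = false} → Fin n)) ≤ (n : ℝ) ^ 2 * (U : ℝ) ^ (L + 1) := by
  classical
  have hU0 : (4 : ℝ) ≤ U := by exact_mod_cast hU
  have hn0 : (4 : ℝ) ≤ n := by exact_mod_cast hn
  obtain ⟨x, hx0, hxp, hxU, hMx⟩ := barrier U hU M hM hint ω L hL
  set A := M.submatrix (Subtype.val : {i // ω i = false} → Fin n)
          (Subtype.val : {i // ω i = false} → Fin n) with hA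
  have hcard : (Fintype.card {i // ω i = false} : ℝ) ≤ n := by
    have := Fintype.card_subtype_le (fun i : Fin n => ω i = false)
    rw [Fintype.card_fin] at this
    exact_mod_cast this
  unfold condNum
  split_ifs with hne
  · have hn1 : ‖Matrix.toEuclideanCLM (𝕜 := ℝ) A‖ ≤ n * U := by
      refine (opnorm_le A U (by positivity) ?_).trans
        (mul_le_mul_of_nonneg_right hcard (by positivity))
      intro i j
      obtain ⟨z, hz, hz'⟩ := hint i j
      simp only [hA, Matrix.submatrix_apply, hz]
      exact_mod_cast hz'
    have hn2 : ‖Matrix.toEuclideanCLM (𝕜 := ℝ) A⁻¹‖ ≤ n * (U : ℝ) ^ L := by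
      refine (opnorm_le A⁻¹ ((U : ℝ) ^ L) (by positivity) ?_).trans
        (mul_le_mul_of_nonneg_right hcard (by positivity))
      intro i j
      by_cases hu : IsUnit A.det
      · have hmul := Matrix.mul_nonsing_inv A hu
        refine (max_principle_s15 A ?_ ?_ (fun a => x a) ?_ ?_ (fun a => A⁻¹ a j) ?_ i).trans (hxU i)
        · intro a b hab
          exact hM.2.1 a b (fun h => hab (Subtype.ext h))
        · intro a
          exact hM.1 a
        · intro a
          exact hxp a a.2
        · intro a
          refine (hMx a a.2).trans (le_of_eq ?_)
          rw [← Fintype.sum_subtype_add_sum_subtype (fun j => ω j = false) (fun j => M a j * x j)]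
          have : ∑ j : {j // ¬ ω j = false}, M a j * x j = 0 :=
            Finset.sum_eq_zero fun j _ => by
              rw [hx0 j (by simpa using j.2), mul_zero]
          rw [this, add_zero]
          rfl
        · intro a
          have := congrFun (congrFun hmul a) j
          rw [Matrix.mul_apply] at this
          rw [this, Matrix.one_apply]
          split_ifs <;> simp
      · rw [Matrix.nonsing_inv_apply_not_isUnit A hu]
        simp
    calc _ ≤ (n * U) * (n * (U : ℝ) ^ L) := by gcongr
      _ = _ := by ring
  · have h1 : (1 : ℝ) ≤ (n : ℝ) ^ 2 := one_le_pow₀ (by linarith)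
    have h2 : (1 : ℝ) ≤ (U : ℝ) ^ (L + 1) := one_le_pow₀ (by linarith)
    nlinarith

lemma final_numeric {n : ℕ} (hn : 3 < n) (U : ℕ) (hU : 3 < U)
    (δ : ℝ) (hδ0 : 0 < δ) (hδ1 : δ < 1) :
    (n : ℝ) ^ 2 * (U : ℝ) ^ (⌈Real.sqrt n * Real.log (n / δ)⌉₊ + 1) ≤
      Real.exp (6 * Real.sqrt n * Real.log U * Real.log (n / δ)) := by
  have hU0 : (4 : ℝ) ≤ U := by exact_mod_cast hU
  have hn0 : (4 : ℝ) ≤ n := by exact_mod_cast hn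
  have hlog4 : 1 ≤ Real.log 4 := by
    have : Real.log 4 = 2 * Real.log 2 := by
      rw [show (4 : ℝ) = 2 ^ 2 by norm_num, Real.log_pow]; norm_num
    have := Real.log_two_gt_d9
    linarith
  have hlU : 1 ≤ Real.log U := hlog4.trans (Real.log_le_log (by norm_num) hU0)
  have hln : 1 ≤ Real.log n := hlog4.trans (Real.log_le_log (by norm_num) hn0)
  have ht : Real.log n ≤ Real.log (n / δ) := by
    apply Real.log_le_log (by linarith)
    rw [le_div_iff₀ hδ0]
    nlinarith
  have hs : 2 ≤ Real.sqrt n := by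
    apply Real.le_sqrt_of_sq_le
    linarith
  rw [← Real.log_le_iff_le_exp (by positivity), Real.log_mul (by positivity) (by positivity),
    Real.log_pow, Real.log_pow]
  generalize Real.log (n / δ) = t at *
  generalize Real.sqrt n = s at *
  generalize Real.log (U : ℝ) = u at *
  generalize Real.log (n : ℝ) = l at *
  have hc : (⌈s * t⌉₊ : ℝ) < s * t + 1 := Nat.ceil_lt_add_one (by nlinarith)
  push_cast
  have hst : 2 * t ≤ s * t := by nlinarith
  have h1 : ((⌈s * t⌉₊ : ℝ) + 1) * u ≤ (s * t + 2) * u := by nlinarith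
  have h2 : s * t ≤ s * t * u := by nlinarith
  have h3 : 2 * u ≤ s * t * u := by nlinarith
  nlinarith

lemma prob_T {n : ℕ} (hn : 3 < n) (T : Finset (Fin n)) :
    (Measure.pi fun _ : Fin n =>
      ENNReal.ofReal ((Real.sqrt n)⁻¹) • Measure.dirac true +
        ENNReal.ofReal (1 - (Real.sqrt n)⁻¹) • Measure.dirac false)
      {ω : Fin n → Bool | ∀ v ∈ T, ω v = false} =
      ENNReal.ofReal (1 - (Real.sqrt n)⁻¹) ^ T.card := by
  classical
  have hn0 : (4 : ℝ) ≤ n := by exact_mod_cast hn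
  have hs : 2 ≤ Real.sqrt n := by
    apply Real.le_sqrt_of_sq_le
    linarith
  have hp1 : (Real.sqrt n)⁻¹ ≤ 1 := inv_le_one_of_one_le₀ (by linarith)
  have hset : {ω : Fin n → Bool | ∀ v ∈ T, ω v = false} =
      Set.pi Set.univ (fun v => if v ∈ T then {false} else Set.univ) := by
    ext ω
    simp only [Set.mem_ofPred_eq, Set.mem_pi, Set.mem_univ, true_implies]
    refine forall_congr' fun v => ?_
    by_cases hv : v ∈ T <;> simp [hv]
  have hfin : IsFiniteMeasure (ENNReal.ofReal ((Real.sqrt n)⁻¹) • Measure.dirac true +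
        ENNReal.ofReal (1 - (Real.sqrt n)⁻¹) • Measure.dirac false : Measure Bool) := by
    refine ⟨?_⟩
    simp only [Measure.coe_add, Pi.add_apply, Measure.smul_apply, measure_univ,
      smul_eq_mul, mul_one]
    exact ENNReal.add_lt_top.mpr ⟨ENNReal.ofReal_lt_top, ENNReal.ofReal_lt_top⟩
  rw [hset, Measure.pi_pi, ← Finset.prod_const, ← Finset.prod_subset (Finset.subset_univ T)]
  · refine Finset.prod_congr rfl fun v hv => ?_
    simp [hv]
  · intro v _ hv
    simp only [hv, if_false, Measure.coe_add, Pi.add_apply, Measure.smul_apply, measure_univ,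
      smul_eq_mul, mul_one]
    rw [← ENNReal.ofReal_add (by positivity) (by linarith)]
    simp

theorem random_submatrix_condition_number {n : ℕ} (hn : 3 < n) (U : ℕ) (hU : 3 < U)
    (δ : ℝ) (hδ0 : 0 < δ) (hδ1 : δ < 1)
    (M : Matrix (Fin n) (Fin n) ℝ) (hM : IsRDDL M) (hInv : IsUnit M)
    (hint : ∀ i j, ∃ z : ℤ, M i j = (z : ℝ) ∧ |z| ≤ (U : ℤ))
    (μ : Measure (Fin n → Bool))
    (hμ : μ = Measure.pi fun _ : Fin n =>
      ENNReal.ofReal ((Real.sqrt n)⁻¹) • Measure.dirac true +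
        ENNReal.ofReal (1 - (Real.sqrt n)⁻¹) • Measure.dirac false) :
    ENNReal.ofReal (1 - δ) ≤
      μ {ω : Fin n → Bool |
        condNum (M.submatrix (Subtype.val : {i // ω i = false} → Fin n)
          (Subtype.val : {i // ω i = false} → Fin n)) ≤
          Real.exp (6 * Real.sqrt n * Real.log U * Real.log (n / δ))} := by
  classical
  have hn0 : (4 : ℝ) ≤ n := by exact_mod_cast hn
  have hs : 2 ≤ Real.sqrt n := by
    apply Real.le_sqrt_of_sq_le
    linarith
  have hp1 : (Real.sqrt n)⁻¹ ≤ 1 := inv_le_one_of_one_le₀ (by linarith)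
  set L := ⌈Real.sqrt n * Real.log (n / δ)⌉₊ with hLdef
  have hμuniv : μ Set.univ = 1 := by
    have := prob_T hn (∅ : Finset (Fin n))
    simpa [← hμ] using this
  have hbad : ∀ i, μ {ω | ¬ Rch M ω L i} ≤ ENNReal.ofReal (δ / n) := by
    intro i
    obtain ⟨k, hk⟩ := exists_Rch M hM hInv i
    rcases path_lemma M k L i hk with h | ⟨T, h1, -, h3⟩
    · have : {ω | ¬ Rch M ω L i} = ∅ := by
        ext ω; simp [h ω]
      rw [this]; simp
    · have hsub : {ω | ¬ Rch M ω L i} ⊆ {ω : Fin n → Bool | ∀ v ∈ T, ω v = false} := by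
        intro ω hω v hv
        by_contra hc
        exact hω (h3 ω ⟨v, hv, by simpa using hc⟩)
      refine (measure_mono hsub).trans ?_
      rw [hμ, prob_T hn T, h1, ← ENNReal.ofReal_pow (by linarith)]
      apply ENNReal.ofReal_le_ofReal
      have hq : 1 - (Real.sqrt n)⁻¹ ≤ Real.exp (-(Real.sqrt n)⁻¹) := by
        have := Real.add_one_le_exp (-(Real.sqrt n)⁻¹)
        linarith
      have hL : Real.sqrt n * Real.log (n / δ) ≤ L := Nat.le_ceil _
      calc (1 - (Real.sqrt n)⁻¹) ^ L ≤ (Real.exp (-(Real.sqrt n)⁻¹)) ^ L :=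
            pow_le_pow_left₀ (by linarith) hq _
        _ = Real.exp (L * (-(Real.sqrt n)⁻¹)) := (Real.exp_nat_mul _ _).symm
        _ ≤ Real.exp (-Real.log (n / δ)) := by
            apply Real.exp_le_exp.mpr
            rw [mul_neg, neg_le_neg_iff, ← div_eq_mul_inv, le_div_iff₀ (by linarith)]
            linarith
        _ = δ / n := by
            rw [Real.exp_neg, Real.exp_log (by positivity), inv_div]
  set G := {ω : Fin n → Bool |
        condNum (M.submatrix (Subtype.val : {i // ω i = false} → Fin n)
          (Subtype.val : {i // ω i = false} → Fin n)) ≤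
          Real.exp (6 * Real.sqrt n * Real.log U * Real.log (n / δ))} with hG
  have hGc : μ Gᶜ ≤ ENNReal.ofReal δ := by
    have hsub : Gᶜ ⊆ ⋃ i, {ω | ¬ Rch M ω L i} := by
      intro ω hω
      by_contra hc
      simp only [Set.mem_iUnion, Set.mem_ofPred_eq, not_exists, not_not] at hc
      exact hω ((cond_bound hn U hU M hM hint ω L hc).trans (final_numeric hn U hU δ hδ0 hδ1))
    calc μ Gᶜ ≤ μ (⋃ i, {ω | ¬ Rch M ω L i}) := measure_mono hsub
      _ ≤ ∑ i, μ {ω | ¬ Rch M ω L i} := measure_iUnion_fintype_le _ _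
      _ ≤ ∑ i : Fin n, ENNReal.ofReal (δ / n) := Finset.sum_le_sum fun i _ => hbad i
      _ = ENNReal.ofReal δ := by
          rw [← ENNReal.ofReal_sum_of_nonneg (fun _ _ => by positivity)]
          congr 1
          simp
          field_simp
  have h1 : (1 : ENNReal) ≤ μ G + ENNReal.ofReal δ := by
    calc (1 : ENNReal) = μ (G ∪ Gᶜ) := by rw [Set.union_compl_self, hμuniv]
      _ ≤ μ G + μ Gᶜ := measure_union_le _ _
      _ ≤ _ := by gcongr
  rw [ENNReal.ofReal_sub _ hδ0.le, ENNReal.ofReal_one]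
  exact tsub_le_iff_right.mpr h1
end
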